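/- arXiv:1404.1056 — 3 statements merged into one kernel-verified Lean document; each statement's English description precedes it below -/
import Mathlib

section
/- For every k ∈ {6, 7, 8} and every input list L, First Fit with cardinality constraint k satisfies FF(L) ≤ (8/3 − 8/(3k))·OPT(L) + 8. Consequently, the asymptotic competitive ratio of First Fit for 6 ≤ k ≤ 8 is at most 8(k−1)/(3k). -/
open scoped Classical
noncomputable section

/-- An input is a list of item sizes, each in (0,1]. -/
def ValidInput (L : List ℝ) : Prop := ∀ x ∈ L, 0 < x ∧ x ≤ 1

/-- A packing assigns a bin index to each item; it is feasible for cardinality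
constraint `k` if every bin receives at most `k` items of total size at most 1. -/
def IsFeasible (k : ℕ) (L : List ℝ) (f : Fin L.length → ℕ) : Prop :=
  ∀ b : ℕ,
    (Finset.univ.filter (fun i => f i = b)).card ≤ k ∧
    ∑ i ∈ Finset.univ.filter (fun i => f i = b), L.get i ≤ 1

/-- The number of bins used by a packing. -/
def binsUsed (L : List ℝ) (f : Fin L.length → ℕ) : ℕ :=
  (Finset.univ.image f).card

/-- The optimal (minimum) number of bins in a feasible packing of `L`. -/
def OPT (k : ℕ) (L : List ℝ) : ℕ :=
  sInf {n | ∃ f : Fin L.length → ℕ, IsFeasible k L f ∧ binsUsed L f = n}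

/-- A deterministic online algorithm is a strategy: given the items seen so far
(ending with the item to be packed), it returns the bin index for that item. -/
def onlinePacking (A : List ℝ → ℕ) (L : List ℝ) : Fin L.length → ℕ :=
  fun i => A (L.take (i.1 + 1))

/-- The strategy `A` is a valid online algorithm for cardinality constraint `k`
if on every valid input the induced packing is feasible. -/
def OnlineValid (k : ℕ) (A : List ℝ → ℕ) : Prop :=
  ∀ L : List ℝ, ValidInput L → IsFeasible k L (onlinePacking A L)

/-- The number of bins used by online algorithm `A` on input `L`. -/
def onlineBins (A : List ℝ → ℕ) (L : List ℝ) : ℕ :=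
  binsUsed L (onlinePacking A L)

/-- The state of First Fit: a list of open bins (in order of opening),
each recorded as (number of items, total size). `ffFind` returns the index of
the first bin that can receive an item of size `x` (it has at most `k-1` items
and the item fits); if none, the index of a new bin. -/
def ffFind (k : ℕ) (x : ℝ) : List (ℕ × ℝ) → ℕ
  | [] => 0
  | b :: bs => if b.1 < k ∧ b.2 + x ≤ 1 then 0 else ffFind k x bs + 1

/-- Update the First Fit state after packing an item of size `x`. -/
def ffUpdate (k : ℕ) (x : ℝ) : List (ℕ × ℝ) → List (ℕ × ℝ)
  | [] => [(1, x)]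
  | b :: bs =>
      if b.1 < k ∧ b.2 + x ≤ 1 then (b.1 + 1, b.2 + x) :: bs
      else b :: ffUpdate k x bs

/-- The final state of First Fit with cardinality constraint `k` on input `L`. -/
def ffState (k : ℕ) (L : List ℝ) : List (ℕ × ℝ) :=
  L.foldl (fun bs x => ffUpdate k x bs) []

/-- The number of bins used by First Fit with cardinality constraint `k` on `L`. -/
def FF (k : ℕ) (L : List ℝ) : ℕ := (ffState k L).length

/-- The bin index into which First Fit packs the `i`-th item of `L`. -/
def ffAssign (k : ℕ) (L : List ℝ) (i : Fin L.length) : ℕ :=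
  ffFind k (L.get i) (ffState k (L.take i.1))

/-!
The proof is a weighting argument. Call an item big, medium or small according to whether its size
is in `(1/2, 1]`, `(1/4, 1/2]` or `(0, 1/4]`. For `k = 4` it is enough to give these items the
weights `4`, `2` and `1`. For larger `k` the weights of medium and small items also depend on their
size, with `weight k x + weight k (1/2 - x)` constant on the medium range, so that whatever
accompanies a big item in a bin is worth no more than if it filled half a bin exactly.

*Optimal side.* A bin with at most `k` items and level at most `1` has weight at most
`8 (k - 1) / 3`. Without a big item this holds because `weight k x - 1 ≤ (5k - 8) / 3 * x`.

*First Fit side.* A bin with `k` items has weight at least `k` as every item weighs at least `1`. If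
a bin with fewer than `k` items has final level `s`, then all items of later bins are larger than
`1 - s`, so for each `t` at most one such bin has both level at most `1 - t` and an item of size at
most `t`. Discarding one bin for each of six values of `t`, the remaining bins have weight at least
`k`. Since `weight k` is affine in `k`, this needs to be checked only for `k = 4` and `k = 8`.
-/

namespace FirstFit

section Multisets

variable {α : Type*}

lemma forall_or_exists_eq_cons (p : α → Prop) (M : Multiset α) :
    (∀ x ∈ M, p x) ∨ ∃ a N, M = a ::ₘ N ∧ ¬ p a := by
  by_cases h : ∀ x ∈ M, p x
  · exact Or.inl h
  · push Not at h
    obtain ⟨a, ha, hpa⟩ := h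
    obtain ⟨N, rfl⟩ := Multiset.exists_cons_of_mem ha
    exact Or.inr ⟨a, N, rfl, hpa⟩

lemma exists_eq_add_filter (p : α → Prop) (M : Multiset α) :
    ∃ A B, M = A + B ∧ (∀ x ∈ A, p x) ∧ ∀ x ∈ B, ¬ p x :=
  ⟨M.filter p, M.filter (fun x => ¬ p x), (Multiset.filter_add_not p M).symm,
    fun _ hx => (Multiset.mem_filter.1 hx).2, fun _ hx => (Multiset.mem_filter.1 hx).2⟩

variable {M : Multiset ℝ} {f : ℝ → ℝ} {a b : ℝ}

lemma sum_map_affine (a b : ℝ) (M : Multiset ℝ) :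
    (M.map fun x => a * x + b).sum = a * M.sum + M.card * b := by
  rw [Multiset.sum_map_add, Multiset.sum_map_mul_left]
  simp

lemma affine_le_sum_map (h : ∀ x ∈ M, a * x + b ≤ f x) :
    a * M.sum + M.card * b ≤ (M.map f).sum :=
  sum_map_affine a b M ▸ Multiset.sum_map_le_sum_map _ _ h

lemma sum_map_le_affine (h : ∀ x ∈ M, f x ≤ a * x + b) :
    (M.map f).sum ≤ a * M.sum + M.card * b :=
  sum_map_affine a b M ▸ Multiset.sum_map_le_sum_map _ _ h

lemma card_mul_le_sum (h : ∀ x ∈ M, a ≤ x) : M.card * a ≤ M.sum := by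
  simpa using Multiset.card_nsmul_le_sum h

lemma sum_le_card_mul (h : ∀ x ∈ M, x ≤ a) : M.sum ≤ M.card * a := by
  simpa using Multiset.sum_le_card_nsmul M a h

end Multisets

/-! ### The weight function -/

/-- The piecewise linear function rising from `0` at `1/9` to `1` at `2/9`. It describes how the
weight of an item varies with its size within the small and within the medium range. -/
def ramp (x : ℝ) : ℝ := max 0 (min (9 * x - 1) 1)

lemma ramp_nonneg (x : ℝ) : 0 ≤ ramp x := le_max_left _ _

lemma ramp_le_one (x : ℝ) : ramp x ≤ 1 := max_le zero_le_one (min_le_right _ _)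

lemma ramp_mono : Monotone ramp := fun x y h => by
  unfold ramp
  gcongr

lemma ramp_of_le {x : ℝ} (h : x ≤ 1 / 9) : ramp x = 0 :=
  max_eq_left ((min_le_left _ _).trans (by linarith))

lemma ramp_of_ge {x : ℝ} (h : 2 / 9 ≤ x) : ramp x = 1 := by
  rw [ramp, min_eq_right (by linarith), max_eq_right zero_le_one]

lemma nine_mul_sub_one_le_ramp {x : ℝ} (h : x ≤ 2 / 9) : 9 * x - 1 ≤ ramp x :=
  le_max_of_le_right (le_min le_rfl (by linarith))

lemma ramp_le_nine_mul_sub_one {x : ℝ} (h : 1 / 9 ≤ x) : ramp x ≤ 9 * x - 1 :=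
  max_le (by linarith) (min_le_left _ _)

lemma ramp_le_mul {x : ℝ} (h : 0 ≤ x) : ramp x ≤ 9 / 2 * x := by
  rcases le_total x (2 / 9) with h' | h'
  · exact max_le (by linarith) ((min_le_left _ _).trans (by linarith))
  · linarith [ramp_le_one x]

lemma chord_le_ramp {x : ℝ} (h : x ≤ 1 / 4) : 36 / 5 * x - 4 / 5 ≤ ramp x := by
  rcases le_total x (1 / 9) with h₁ | h₁
  · linarith [ramp_nonneg x]
  · exact le_max_of_le_right (le_min (by linarith) (by linarith))

lemma ramp_add_le {x y : ℝ} (hx : 0 ≤ x) (hy : 0 ≤ y) (h : x + y ≤ 1 / 3) :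
    ramp x + ramp y ≤ ramp (x + y) := by
  rcases le_total x (1 / 9) with hx' | hx'
  · rw [ramp_of_le hx', zero_add]
    exact ramp_mono (by linarith)
  rcases le_total y (1 / 9) with hy' | hy'
  · rw [ramp_of_le hy', add_zero]
    exact ramp_mono (by linarith)
  · rw [ramp_of_ge (x := x + y) (by linarith)]
    linarith [ramp_le_nine_mul_sub_one hx', ramp_le_nine_mul_sub_one hy']

lemma sum_map_ramp_le {M : Multiset ℝ} (hpos : ∀ x ∈ M, 0 ≤ x) (h : M.sum ≤ 1 / 3) :
    (M.map ramp).sum ≤ ramp M.sum := by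
  induction M using Multiset.induction with
  | empty => simpa using ramp_nonneg 0
  | cons a M ih =>
    rw [Multiset.forall_mem_cons] at hpos
    rw [Multiset.sum_cons] at h
    have hM := Multiset.sum_nonneg hpos.2
    rw [Multiset.map_cons, Multiset.sum_cons, Multiset.sum_cons]
    linarith [ih hpos.2 (by linarith [hpos.1]), ramp_add_le hpos.1 hM h]

/-- The weight of an item of size `x` under cardinality constraint `k`, normalized so that First Fit
bins weigh at least `k`, up to a constant number of them. The parameter is real because the bound
for `4 ≤ k ≤ 8` is interpolated from its two endpoints. -/
def weight (k x : ℝ) : ℝ :=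
  if x ≤ 1 / 4 then 1 + (k - 4) / 3 * ramp x
  else if x ≤ 1 / 2 then (2 * k - 2) / 3 - (k - 4) / 3 * ramp (1 / 2 - x)
  else k

section weight

variable {k x : ℝ}

lemma weight_of_small (k : ℝ) (h : x ≤ 1 / 4) : weight k x = 1 + (k - 4) / 3 * ramp x := if_pos h

lemma weight_of_medium (k : ℝ) (h : 1 / 4 < x) (h' : x ≤ 1 / 2) :
    weight k x = (2 * k - 2) / 3 - (k - 4) / 3 * ramp (1 / 2 - x) := by
  rw [weight, if_neg h.not_ge, if_pos h']

lemma weight_of_big (k : ℝ) (h : 1 / 2 < x) : weight k x = k := by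
  rw [weight, if_neg (by linarith), if_neg h.not_ge]

lemma weight_eq_interpolation (k x : ℝ) :
    weight k x = (8 - k) / 4 * weight 4 x + (k - 4) / 4 * weight 8 x := by
  unfold weight
  split_ifs <;> ring

lemma one_le_weight (hk : 4 ≤ k) (x : ℝ) : 1 ≤ weight k x := by
  have hk' : 0 ≤ (k - 4) / 3 := by linarith
  unfold weight
  split_ifs
  · linarith [mul_nonneg hk' (ramp_nonneg x)]
  · linarith [mul_le_of_le_one_right hk' (ramp_le_one (1 / 2 - x))]
  · linarith

lemma sum_weight_nonneg (hk : 4 ≤ k) (M : Multiset ℝ) : 0 ≤ (M.map (weight k)).sum :=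
  Multiset.sum_nonneg fun y hy => by
    obtain ⟨x, -, rfl⟩ := Multiset.mem_map.1 hy
    linarith [one_le_weight hk x]

lemma card_le_sum_weight (hk : 4 ≤ k) (M : Multiset ℝ) : M.card ≤ (M.map (weight k)).sum := by
  simpa using affine_le_sum_map (M := M) (a := 0) (b := 1) (f := weight k)
    fun x _ => by linarith [one_le_weight hk x]

end weight

/-! ### Bins of an arbitrary packing -/

section Optimal

variable {k : ℝ} {M : Multiset ℝ}

lemma weight_le_affine (hk : 4 ≤ k) (hk' : k ≤ 14) {x : ℝ} (hx : 0 ≤ x) (h : x ≤ 1 / 2) :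
    weight k x ≤ (5 * k - 8) / 3 * x + 1 := by
  rcases le_or_gt x (1 / 4) with hs | hm
  · rw [weight_of_small k hs]
    nlinarith [ramp_le_mul hx]
  · rw [weight_of_medium k hm h]
    nlinarith [chord_le_ramp (x := 1 / 2 - x) (by linarith)]

lemma sum_weight_le_of_sum_le_half (hk : 4 ≤ k) (hk' : k ≤ 16) (hpos : ∀ x ∈ M, 0 ≤ x)
    (h : M.sum ≤ 1 / 2) : (M.map (weight k)).sum ≤ M.card + (2 * k - 5) / 3 := by
  have sum_small {N : Multiset ℝ} (hN : ∀ x ∈ N, x ≤ 1 / 4) :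
      (N.map (weight k)).sum = N.card + (k - 4) / 3 * (N.map ramp).sum := by
    rw [Multiset.map_congr rfl fun x hx => weight_of_small k (hN x hx)]
    simp [Multiset.sum_map_add, Multiset.sum_map_mul_left]
  rcases forall_or_exists_eq_cons (· ≤ 1 / 4) M with hs | ⟨a, N, rfl, ha⟩
  · rw [sum_small hs]
    have hramp : (M.map ramp).sum ≤ 9 / 2 * M.sum + M.card * 0 :=
      sum_map_le_affine fun x hx => by linarith [ramp_le_mul (hpos x hx)]
    nlinarith
  · rw [Multiset.forall_mem_cons] at hpos
    rw [Multiset.sum_cons] at h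
    rw [not_le] at ha
    have hNsum := Multiset.sum_nonneg hpos.2
    have hNsmall : ∀ x ∈ N, x ≤ 1 / 4 := fun x hx => by
      linarith [Multiset.single_le_sum hpos.2 x hx]
    have hramp : (N.map ramp).sum ≤ ramp (1 / 2 - a) :=
      (sum_map_ramp_le hpos.2 (by linarith)).trans (ramp_mono (by linarith))
    rw [Multiset.map_cons, Multiset.sum_cons, sum_small hNsmall,
      weight_of_medium k ha (by linarith), Multiset.card_cons, Nat.cast_succ]
    linarith [mul_le_mul_of_nonneg_left hramp (by linarith : 0 ≤ (k - 4) / 3)]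

theorem sum_weight_le (hk : 4 ≤ k) (hk' : k ≤ 14) (hpos : ∀ x ∈ M, 0 ≤ x) (h : M.sum ≤ 1)
    (hcard : M.card ≤ k) : (M.map (weight k)).sum ≤ 8 * (k - 1) / 3 := by
  rcases forall_or_exists_eq_cons (· ≤ 1 / 2) M with hhalf | ⟨a, N, rfl, ha⟩
  · have := sum_map_le_affine fun x hx => weight_le_affine hk hk' (hpos x hx) (hhalf x hx)
    nlinarith
  · rw [Multiset.forall_mem_cons] at hpos
    rw [Multiset.sum_cons] at h
    rw [not_le] at ha
    rw [Multiset.card_cons, Nat.cast_succ] at hcard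
    rw [Multiset.map_cons, Multiset.sum_cons, weight_of_big k ha]
    linarith [sum_weight_le_of_sum_le_half hk (by linarith) hpos.2 (by linarith)]

end Optimal

/-! ### Bins of First Fit -/

/-- What First Fit guarantees for all but one of its bins with fewer than `k` items, for each `t`:
the bin is filled beyond `1 - t` or has only items larger than `t`. -/
def IsTight (t : ℝ) (M : Multiset ℝ) : Prop := 1 - t < M.sum ∨ ∀ x ∈ M, t < x

section IsTight

variable {M : Multiset ℝ} {t : ℝ}

lemma IsTight.lt_sum_of_exists (h : IsTight t M) (hx : ∃ x ∈ M, x ≤ t) : 1 - t < M.sum := by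
  obtain ⟨x, hxM, hxt⟩ := hx
  exact h.resolve_right fun hall => (hall x hxM).not_ge hxt

lemma IsTight.lt_sum_of_forall (h : IsTight t M) (hM : M ≠ 0) (hle : ∀ x ∈ M, x ≤ t) :
    1 - t < M.sum := by
  obtain ⟨x, hx⟩ := Multiset.exists_mem_of_ne_zero hM
  exact h.lt_sum_of_exists ⟨x, hx, hle x hx⟩

end IsTight

lemma weight_four_mem_range_natCast (x : ℝ) :
    weight 4 x ∈ AddMonoidHom.mrange (Nat.castAddMonoidHom ℝ) := by
  simp only [AddMonoidHom.mem_mrange, Nat.coe_castAddMonoidHom]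
  unfold weight
  split_ifs
  exacts [⟨1, by norm_num⟩, ⟨2, by norm_num⟩, ⟨4, by norm_num⟩]

lemma exists_natCast_eq_sum_weight_four (M : Multiset ℝ) :
    ∃ n : ℕ, (n : ℝ) = (M.map (weight 4)).sum :=
  multiset_sum_mem (S := AddMonoidHom.mrange (Nat.castAddMonoidHom ℝ)) _ fun y hy => by
    obtain ⟨x, -, rfl⟩ := Multiset.mem_map.1 hy
    exact weight_four_mem_range_natCast x

theorem four_le_sum_weight_four {M : Multiset ℝ} (hM : M ≠ 0) (hhalf : ∀ x ∈ M, x ≤ 1 / 2)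
    (ht₂ : IsTight (1 / 2) M) (ht₄ : IsTight (1 / 4) M) : 4 ≤ (M.map (weight 4)).sum := by
  by_cases hsmall : ∃ x ∈ M, x ≤ 1 / 4
  · have hlevel := ht₄.lt_sum_of_exists hsmall
    have hweight : 4 * M.sum + M.card * 0 ≤ (M.map (weight 4)).sum :=
      affine_le_sum_map fun x hx => by
      have := hhalf x hx
      unfold weight
      split_ifs <;> linarith
    obtain ⟨n, hn⟩ := exists_natCast_eq_sum_weight_four M
    have hn3 : 3 < n := by
      have : (3 : ℝ) < n := by linarith
      exact_mod_cast this
    rw [← hn]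
    exact_mod_cast hn3
  · push Not at hsmall
    have hlevel := ht₂.lt_sum_of_forall hM hhalf
    have hcard : (1 : ℝ) < M.card := by linarith [sum_le_card_mul hhalf]
    have hcard2 : (2 : ℝ) ≤ M.card := by exact_mod_cast hcard
    have hweight : 0 * M.sum + M.card * 2 ≤ (M.map (weight 4)).sum :=
      affine_le_sum_map fun x hx => by
      rw [weight_of_medium 4 (hsmall x hx) (hhalf x hx)]
      linarith
    linarith

/-- The division of a bin `M` without big items into four ranges of sizes, on each of which
`weight 8` has a simple lower bound: `36 * x - 3 * weight 8 x` is at most `4`, `0`, `2` and `1` on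
`B`, `N`, `C` and `D`. -/
structure IsSizeSplit (M B N C D : Multiset ℝ) : Prop where
  eq_add : M = (B + N) + (C + D)
  mem_B : ∀ x ∈ B, 7 / 18 < x ∧ x ≤ 1 / 2
  mem_N : ∀ x ∈ N, 1 / 4 < x ∧ x ≤ 7 / 18
  mem_C : ∀ x ∈ C, 2 / 9 < x ∧ x ≤ 1 / 4
  mem_D : ∀ x ∈ D, x ≤ 2 / 9

lemma exists_isSizeSplit {M : Multiset ℝ} (h : ∀ x ∈ M, x ≤ 1 / 2) :
    ∃ B N C D, IsSizeSplit M B N C D := by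
  obtain ⟨P, Q, rfl, hP, hQ⟩ := exists_eq_add_filter (1 / 4 < ·) M
  obtain ⟨B, N, rfl, hB, hN⟩ := exists_eq_add_filter (7 / 18 < ·) P
  obtain ⟨C, D, rfl, hC, hD⟩ := exists_eq_add_filter (2 / 9 < ·) Q
  simp only [not_lt, Multiset.mem_add] at h hP hQ hN hD
  exact ⟨B, N, C, D, rfl, fun x hx => ⟨hB x hx, h x (.inl (.inl hx))⟩,
    fun x hx => ⟨hP x (.inr hx), hN x hx⟩, fun x hx => ⟨hC x hx, hQ x (.inl hx)⟩, hD⟩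

namespace IsSizeSplit

variable {M B N C D : Multiset ℝ}

lemma weight_eight_of_mem_B (h : IsSizeSplit M B N C D) {x : ℝ} (hx : x ∈ B) :
    weight 8 x = 14 / 3 := by
  obtain ⟨hlo, hhi⟩ := h.mem_B x hx
  rw [weight_of_medium 8 (by linarith) hhi, ramp_of_le (by linarith)]
  norm_num

lemma weight_eight_of_mem_C (h : IsSizeSplit M B N C D) {x : ℝ} (hx : x ∈ C) :
    weight 8 x = 7 / 3 := by
  obtain ⟨hlo, hhi⟩ := h.mem_C x hx
  rw [weight_of_small 8 hhi, ramp_of_ge hlo.le]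
  norm_num

lemma mul_le_weight_eight_of_mem_N (h : IsSizeSplit M B N C D) {x : ℝ} (hx : x ∈ N) :
    12 * x ≤ weight 8 x := by
  obtain ⟨hlo, hhi⟩ := h.mem_N x hx
  rw [weight_of_medium 8 hlo (by linarith)]
  linarith [ramp_le_nine_mul_sub_one (x := 1 / 2 - x) (by linarith)]

lemma le_weight_eight_of_mem_N (h : IsSizeSplit M B N C D) {x : ℝ} (hx : x ∈ N) :
    10 / 3 ≤ weight 8 x := by
  obtain ⟨hlo, hhi⟩ := h.mem_N x hx
  rw [weight_of_medium 8 hlo (by linarith)]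
  linarith [ramp_le_one (1 / 2 - x)]

lemma affine_le_weight_eight_of_mem_D (h : IsSizeSplit M B N C D) {x : ℝ} (hx : x ∈ D) :
    12 * x - 1 / 3 ≤ weight 8 x := by
  have hhi := h.mem_D x hx
  rw [weight_of_small 8 (by linarith)]
  linarith [nine_mul_sub_one_le_ramp hhi]

lemma sum_le (h : IsSizeSplit M B N C D) :
    36 * M.sum ≤ 18 * B.card + 14 * N.card + 9 * C.card + 8 * D.card := by
  have hB := sum_le_card_mul fun x hx => (h.mem_B x hx).2
  have hN := sum_le_card_mul fun x hx => (h.mem_N x hx).2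
  have hC := sum_le_card_mul fun x hx => (h.mem_C x hx).2
  have hD := sum_le_card_mul h.mem_D
  simp only [h.eq_add, Multiset.sum_add]
  linarith

lemma sum_sub_loss_le_sum_weight (h : IsSizeSplit M B N C D) :
    36 * M.sum - (4 * B.card + 2 * C.card + D.card) ≤ 3 * (M.map (weight 8)).sum := by
  have hB : 12 * B.sum + B.card * (-4 / 3) ≤ (B.map (weight 8)).sum :=
      affine_le_sum_map fun x hx => by
    linarith [h.weight_eight_of_mem_B hx, (h.mem_B x hx).2]
  have hN : 12 * N.sum + N.card * 0 ≤ (N.map (weight 8)).sum := affine_le_sum_map fun x hx => by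
    linarith [h.mul_le_weight_eight_of_mem_N hx]
  have hC : 12 * C.sum + C.card * (-2 / 3) ≤ (C.map (weight 8)).sum :=
      affine_le_sum_map fun x hx => by
    linarith [h.weight_eight_of_mem_C hx, (h.mem_C x hx).2]
  have hD : 12 * D.sum + D.card * (-1 / 3) ≤ (D.map (weight 8)).sum :=
      affine_le_sum_map fun x hx => by
    linarith [h.affine_le_weight_eight_of_mem_D hx]
  simp only [h.eq_add, Multiset.map_add, Multiset.sum_add]
  linarith

lemma card_le_sum_weight (h : IsSizeSplit M B N C D) {w : ℝ} (hw : ∀ x ∈ D, w ≤ weight 8 x) :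
    14 * B.card + 10 * N.card + 7 * C.card + 3 * w * D.card ≤ 3 * (M.map (weight 8)).sum := by
  have hB : 0 * B.sum + B.card * (14 / 3) ≤ (B.map (weight 8)).sum :=
      affine_le_sum_map fun x hx => by
    linarith [h.weight_eight_of_mem_B hx]
  have hN : 0 * N.sum + N.card * (10 / 3) ≤ (N.map (weight 8)).sum :=
      affine_le_sum_map fun x hx => by
    linarith [h.le_weight_eight_of_mem_N hx]
  have hC : 0 * C.sum + C.card * (7 / 3) ≤ (C.map (weight 8)).sum :=
      affine_le_sum_map fun x hx => by
    linarith [h.weight_eight_of_mem_C hx]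
  have hD : 0 * D.sum + D.card * w ≤ (D.map (weight 8)).sum := affine_le_sum_map fun x hx => by
    linarith [hw x hx]
  simp only [h.eq_add, Multiset.map_add, Multiset.sum_add]
  linarith

end IsSizeSplit

/-- The values of `36 * t` for the `t` at which the tightness of First Fit bins is used: bins with a
small item need `t = 1/4` and the values from `exists_threshold`, all others `t = 1/3` and
`t = 1/2`. -/
def thresholds : Finset ℕ := {5, 6, 7, 9, 12, 18}

-- For a bin with `b`, `n`, `c`, `d` items in the four ranges of `IsSizeSplit` and `t = T / 36`, the
-- first inequality on `T` makes a level beyond `1 - t` enough for weight `8`, and the second makes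
-- items larger than `t` enough.
lemma exists_threshold {b n c d : ℕ}
    (hfloor : 14 * b + 10 * n + 7 * c + 3 * d < 24)
    (hlevel : 27 < 18 * b + 14 * n + 9 * c + 8 * d) (hloss : 3 < 4 * b + 2 * c + d) :
    ∃ T ∈ thresholds, T + (4 * b + 2 * c + d) ≤ 12 ∧
      24 + d ≤ 14 * b + 10 * n + 7 * c + T * d := by
  rcases (by omega : 4 * b + 2 * c + d ≤ 5 ∨ 4 * b + 2 * c + d = 6 ∨ 4 * b + 2 * c + d = 7)
    with h | h | h
  · refine ⟨7, by decide, by omega, ?_⟩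
    have hb : b ≤ 1 := by omega
    have hn : n ≤ 2 := by omega
    have hc : c ≤ 3 := by omega
    interval_cases b <;> interval_cases n <;> interval_cases c <;> omega
  · exact ⟨6, by decide, by omega⟩
  · exact ⟨5, by decide, by omega⟩

namespace IsSizeSplit

variable {M B N : Multiset ℝ}

lemma eight_le_sum_weight_eight_of_no_small (h : IsSizeSplit M B N 0 0) (hM : M ≠ 0)
    (ht₂ : IsTight (1 / 2) M) (ht₃ : IsTight (1 / 3) M) : 8 ≤ (M.map (weight 8)).sum := by
  by_contra! hlt
  have hhalf : ∀ x ∈ M, x ≤ 1 / 2 := by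
    simp only [h.eq_add, add_zero, Multiset.mem_add]
    rintro x (hx | hx)
    exacts [(h.mem_B x hx).2, by linarith [(h.mem_N x hx).2]]
  have hfloor := h.card_le_sum_weight (w := 0) (by simp)
  have hlevel := h.sum_le
  have hloss := h.sum_sub_loss_le_sum_weight
  have hsum := ht₂.lt_sum_of_forall hM hhalf
  simp only [Multiset.card_zero, Nat.cast_zero, mul_zero, add_zero] at hfloor hlevel hloss
  have hfloor' : 14 * B.card + 10 * N.card < 24 := by
    have : (14 * B.card + 10 * N.card : ℝ) < 24 := by linarith
    exact_mod_cast this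
  have hlevel' : 18 < 18 * B.card + 14 * N.card := by
    have : (18 : ℝ) < 18 * B.card + 14 * N.card := by linarith
    exact_mod_cast this
  obtain ⟨hB, hN⟩ : B.card = 0 ∧ N.card = 2 := by
    have : B.card ≤ 1 := by omega
    interval_cases B.card <;> omega
  rw [hB, Nat.cast_zero] at hloss
  have hthird : ∀ x ∈ M, 1 / 3 ≤ x := fun x hx =>
    (ht₃.resolve_left (by linarith) x hx).le
  have hMcard : M.card = 2 := by simp [h.eq_add, hB, hN]
  have := card_mul_le_sum hthird
  rw [hMcard, Nat.cast_ofNat] at this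
  linarith

end IsSizeSplit

theorem eight_le_sum_weight_eight {M : Multiset ℝ} (hM : M ≠ 0)
    (hhalf : ∀ x ∈ M, x ≤ 1 / 2) (ht : ∀ T ∈ thresholds, IsTight (T / 36) M) :
    8 ≤ (M.map (weight 8)).sum := by
  have tight {t : ℝ} (T : ℕ) (hT : T ∈ thresholds) (h : (T : ℝ) / 36 = t) : IsTight t M :=
    h ▸ ht T hT
  obtain ⟨B, N, C, D, h⟩ := exists_isSizeSplit hhalf
  rcases Multiset.empty_or_exists_mem (C + D) with hCD | ⟨y, hy⟩
  · obtain ⟨rfl, rfl⟩ := add_eq_zero.1 hCD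
    exact h.eight_le_sum_weight_eight_of_no_small hM (tight 18 (by decide) (by norm_num))
      (tight 12 (by decide) (by norm_num))
  by_contra! hlt
  have hsum : 1 - 1 / 4 < M.sum := by
    refine (tight 9 (by decide) (by norm_num)).lt_sum_of_exists
      ⟨y, h.eq_add ▸ Multiset.mem_add.2 (.inr hy), ?_⟩
    rcases Multiset.mem_add.1 hy with hy | hy
    exacts [(h.mem_C y hy).2, by linarith [h.mem_D y hy]]
  have hloss := h.sum_sub_loss_le_sum_weight
  obtain ⟨T, hT, hTloss, hTcard⟩ : ∃ T ∈ thresholds,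
      T + (4 * B.card + 2 * C.card + D.card) ≤ 12 ∧
      24 + D.card ≤ 14 * B.card + 10 * N.card + 7 * C.card + T * D.card := by
    refine exists_threshold ?_ ?_ ?_
    · have := h.card_le_sum_weight fun x _ => one_le_weight (by norm_num : (4 : ℝ) ≤ 8) x
      have : (14 * B.card + 10 * N.card + 7 * C.card + 3 * D.card : ℝ) < 24 := by linarith
      exact_mod_cast this
    · have : (27 : ℝ) < 18 * B.card + 14 * N.card + 9 * C.card + 8 * D.card := by
        linarith [h.sum_le]
      exact_mod_cast this
    · have : (3 : ℝ) < 4 * B.card + 2 * C.card + D.card := by linarith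
      exact_mod_cast this
  rcases ht T hT with hlevel | hitems
  · have : (T + (4 * B.card + 2 * C.card + D.card) : ℝ) ≤ 12 := by exact_mod_cast hTloss
    linarith
  · have hweight := h.card_le_sum_weight (w := 12 * (T / 36) - 1 / 3) fun x hx => by
      linarith [h.affine_le_weight_eight_of_mem_D hx, hitems x (by simp [h.eq_add, hx])]
    have : (24 + D.card : ℝ) ≤ 14 * B.card + 10 * N.card + 7 * C.card + T * D.card := by
      exact_mod_cast hTcard
    linarith

theorem le_sum_weight {k : ℝ} (hk : 4 ≤ k) (hk' : k ≤ 8) {M : Multiset ℝ} (hM : M ≠ 0)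
    (ht : ∀ T ∈ thresholds, IsTight (T / 36) M) :
    k ≤ (M.map (weight k)).sum := by
  rcases forall_or_exists_eq_cons (· ≤ 1 / 2) M with hhalf | ⟨a, N, rfl, ha⟩
  · have h₂ : IsTight (1 / 2) M := by convert ht 18 (by decide) using 1; norm_num
    have h₄ : IsTight (1 / 4) M := by convert ht 9 (by decide) using 1; norm_num
    have hfour := four_le_sum_weight_four hM hhalf h₂ h₄
    have height := eight_le_sum_weight_eight hM hhalf ht
    have hmap : M.map (weight k) =
        M.map fun x => (8 - k) / 4 * weight 4 x + (k - 4) / 4 * weight 8 x :=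
      Multiset.map_congr rfl fun x _ => weight_eq_interpolation k x
    rw [hmap, Multiset.sum_map_add, Multiset.sum_map_mul_left, Multiset.sum_map_mul_left]
    nlinarith
  · rw [Multiset.map_cons, Multiset.sum_cons, weight_of_big k (not_le.1 ha)]
    linarith [sum_weight_nonneg hk N]

/-! ### The course of First Fit -/

section Lists

variable {α : Type*} {l : List α}

lemma countP_le_one {p : α → Prop} [DecidablePred p] (h : l.Pairwise fun a b => ¬ (p a ∧ p b)) :
    l.countP (p ·) ≤ 1 := by
  rw [List.countP_eq_length_filter]
  have hpair := h.filter (p ·)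
  have hmem : ∀ a ∈ l.filter (p ·), p a := fun a ha => by simpa using List.of_mem_filter ha
  match hfilter : l.filter (p ·) with
  | [] => simp
  | [a] => simp
  | a :: b :: _ =>
    rw [hfilter] at hpair hmem
    exact (List.rel_of_pairwise_cons hpair (by simp) ⟨hmem a (by simp), hmem b (by simp)⟩).elim

lemma mul_length_le_sum_add_mul_sum_countP {ι : Type*} {S : Finset ι} {p : ι → α → Prop}
    [∀ i, DecidablePred (p i)] {f : α → ℝ} {a : ℝ} (hf : ∀ b ∈ l, 0 ≤ f b) (ha : 0 ≤ a)
    (h : ∀ b ∈ l, (∀ i ∈ S, ¬ p i b) → a ≤ f b) :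
    a * l.length ≤ (l.map f).sum + a * ∑ i ∈ S, (l.countP (p i ·) : ℝ) := by
  induction l with
  | nil => simp
  | cons b l ih =>
    rw [List.forall_mem_cons] at hf h
    have hb : a ≤ f b + a * ∑ i ∈ S, if p i b then 1 else 0 := by
      have hterm : ∀ i ∈ S, (0 : ℝ) ≤ if p i b then 1 else 0 := fun i _ => by positivity
      by_cases hgood : ∀ i ∈ S, ¬ p i b
      · linarith [h.1 hgood, mul_nonneg ha (Finset.sum_nonneg hterm)]
      · push Not at hgood
        obtain ⟨i, hi, hpi⟩ := hgood
        have := Finset.single_le_sum hterm hi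
        rw [if_pos hpi] at this
        linarith [hf.1, le_mul_of_one_le_right ha this]
    simp only [List.length_cons, List.map_cons, List.sum_cons, List.countP_cons, decide_eq_true_eq,
      Nat.cast_add, Nat.cast_ite, Nat.cast_one, Nat.cast_zero, Finset.sum_add_distrib]
    linarith [ih hf.2 h.2]

end Lists

/-- `ffUpdate` acting on the contents of the bins instead of their numbers of items and levels. -/
def binsUpdate (k : ℕ) (x : ℝ) : List (Multiset ℝ) → List (Multiset ℝ)
  | [] => [{x}]
  | b :: bs =>
      if b.card < k ∧ b.sum + x ≤ 1 then (x ::ₘ b) :: bs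
      else b :: binsUpdate k x bs

/-- The contents of the bins of First Fit with cardinality constraint `k` on input `L`, in order of
opening. -/
def ffBins (k : ℕ) (L : List ℝ) : List (Multiset ℝ) :=
  L.foldl (fun bs x => binsUpdate k x bs) []

/-- A bin `b` with fewer than `k` items had no room for any of the items of the later bin `c`. -/
def NoRoom (k : ℕ) (b c : Multiset ℝ) : Prop := b.card < k → ∀ x ∈ c, 1 < b.sum + x

section ffBins

variable {k : ℕ} {x : ℝ} {bs : List (Multiset ℝ)} {c : Multiset ℝ}

lemma ffUpdate_map (k : ℕ) (x : ℝ) (bs : List (Multiset ℝ)) :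
    ffUpdate k x (bs.map fun b => (b.card, b.sum)) =
      (binsUpdate k x bs).map fun b => (b.card, b.sum) := by
  induction bs with
  | nil => simp [ffUpdate, binsUpdate]
  | cons b bs ih =>
    simp only [List.map_cons, ffUpdate, binsUpdate, ih]
    split_ifs
    · simp [add_comm x]
    · rfl

lemma ffState_eq_map_ffBins (k : ℕ) (L : List ℝ) :
    ffState k L = (ffBins k L).map fun b => (b.card, b.sum) :=
  List.foldl_hom (List.map fun b : Multiset ℝ => (b.card, b.sum))
    (g₁ := fun bs x => binsUpdate k x bs) (init := []) fun bs x => ffUpdate_map k x bs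

lemma FF_eq_length_ffBins (k : ℕ) (L : List ℝ) : FF k L = (ffBins k L).length := by
  rw [FF, ffState_eq_map_ffBins, List.length_map]

lemma sum_binsUpdate (k : ℕ) (x : ℝ) (bs : List (Multiset ℝ)) :
    (binsUpdate k x bs).sum = x ::ₘ bs.sum := by
  induction bs with
  | nil => simp [binsUpdate]
  | cons b bs ih =>
    rw [binsUpdate]
    split_ifs <;> simp [ih]

lemma sum_ffBins (k : ℕ) (L : List ℝ) : (ffBins k L).sum = (L : Multiset ℝ) := by
  induction L using List.reverseRecOn with
  | nil => rfl
  | append_singleton L x ih =>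
    rw [ffBins, List.foldl_concat, sum_binsUpdate, ← ffBins, ih, Multiset.cons_coe]
    exact Multiset.coe_eq_coe.2 (List.perm_append_singleton x L).symm

lemma sum_map_ffBins (k : ℕ) (L : List ℝ) (g : ℝ → ℝ) :
    ((ffBins k L).map fun b => (b.map g).sum).sum = (L.map g).sum := by
  rw [← Multiset.sum_coe (L.map g), ← Multiset.map_coe, ← sum_ffBins k L]
  exact (map_list_sum (Multiset.sumAddMonoidHom.comp (Multiset.mapAddMonoidHom g)) _).symm

lemma mem_binsUpdate (hk : 0 < k) (hc : c ∈ binsUpdate k x bs) :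
    c ∈ bs ∨ ∃ b ∈ (0 :: bs), b.card < k ∧ c = x ::ₘ b := by
  induction bs with
  | nil => exact .inr ⟨0, by simpa [binsUpdate, hk] using hc⟩
  | cons b bs ih =>
    rw [binsUpdate] at hc
    split_ifs at hc with hfit
    · rcases List.mem_cons.1 hc with rfl | hc
      exacts [.inr ⟨b, by simp, hfit.1, rfl⟩, .inl (by simp [hc])]
    · rcases List.mem_cons.1 hc with rfl | hc
      · exact .inl (by simp)
      · rcases ih hc with h | ⟨b', hb', h⟩
        exacts [.inl (by simp [h]), .inr ⟨b', by aesop, h⟩]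

lemma ne_zero_and_card_le_of_mem_ffBins (hk : 0 < k) (L : List ℝ) :
    ∀ b ∈ ffBins k L, b ≠ 0 ∧ b.card ≤ k :=
  List.foldlRecOn (motive := fun bs : List (Multiset ℝ) => ∀ b ∈ bs, b ≠ 0 ∧ b.card ≤ k) L _
    (by simp) fun bs ih x _ c hc => by
      rcases mem_binsUpdate hk hc with hc | ⟨b, -, hcard, rfl⟩
      · exact ih c hc
      · exact ⟨Multiset.cons_ne_zero, by simpa using hcard⟩

lemma pairwise_noRoom_binsUpdate (hk : 0 < k) (hx : 0 < x) (h : bs.Pairwise (NoRoom k)) :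
    (binsUpdate k x bs).Pairwise (NoRoom k) := by
  induction bs with
  | nil => simp [binsUpdate]
  | cons b bs ih =>
    rw [List.pairwise_cons] at h
    rw [binsUpdate]
    split_ifs with hfit <;> rw [List.pairwise_cons]
    · refine ⟨fun c hc _ y hy => ?_, h.2⟩
      rw [Multiset.sum_cons]
      linarith [h.1 c hc hfit.1 y hy]
    · refine ⟨fun c hc hcard y hy => ?_, ih h.2⟩
      rcases mem_binsUpdate hk hc with hc | ⟨b', hb', -, rfl⟩
      · exact h.1 c hc hcard y hy
      rcases Multiset.mem_cons.1 hy with rfl | hy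
      · exact not_le.1 fun hle => hfit ⟨hcard, hle⟩
      · rcases List.mem_cons.1 hb' with rfl | hb'
        exacts [(Multiset.notMem_zero y hy).elim, h.1 b' hb' hcard y hy]

lemma pairwise_noRoom_ffBins (hk : 0 < k) {L : List ℝ} (hL : ∀ x ∈ L, 0 < x) :
    (ffBins k L).Pairwise (NoRoom k) :=
  List.foldlRecOn L _ List.Pairwise.nil fun _ ih x hx => pairwise_noRoom_binsUpdate hk (hL x hx) ih

lemma countP_not_isTight_ffBins_le_one (hk : 0 < k) {L : List ℝ} (hL : ∀ x ∈ L, 0 < x) (t : ℝ) :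
    (ffBins k L).countP (fun b => b.card < k ∧ ¬ IsTight t b) ≤ 1 := by
  refine countP_le_one ((pairwise_noRoom_ffBins hk hL).imp ?_)
  rintro b c hbc ⟨⟨hcard, hb⟩, -, hc⟩
  simp only [IsTight, not_or, not_lt, not_forall] at hb hc
  obtain ⟨-, y, hy, hyt⟩ := hc
  linarith [hbc hcard y hy]

theorem mul_FF_le_sum_weight_add (hk : 4 ≤ k) (hk' : k ≤ 8) {L : List ℝ} (hL : ∀ x ∈ L, 0 < x) :
    (k * FF k L : ℝ) ≤ (L.map (weight k)).sum + 6 * k := by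
  have hk₀ : 0 < k := by omega
  have hk₄ : (4 : ℝ) ≤ k := by exact_mod_cast hk
  have hgood : ∀ b ∈ ffBins k L, (∀ T ∈ thresholds, ¬ (b.card < k ∧ ¬ IsTight ((T : ℝ) / 36) b)) →
      (k : ℝ) ≤ (b.map (weight k)).sum := fun b hb htight => by
    obtain ⟨hne, hcard⟩ := ne_zero_and_card_le_of_mem_ffBins hk₀ L b hb
    rcases hcard.eq_or_lt with hfull | hlt
    · simpa [hfull] using card_le_sum_weight hk₄ b
    · exact le_sum_weight hk₄ (by exact_mod_cast hk') hne fun T hT =>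
        not_not.1 fun hloose => htight T hT ⟨hlt, hloose⟩
  have hcount : ∑ T ∈ thresholds,
      ((ffBins k L).countP (fun b => b.card < k ∧ ¬ IsTight ((T : ℝ) / 36) b) : ℝ) ≤ 6 :=
    (Finset.sum_le_card_nsmul thresholds _ 1 fun T _ => by
      exact_mod_cast countP_not_isTight_ffBins_le_one hk₀ hL _).trans (by simp [thresholds])
  have := mul_length_le_sum_add_mul_sum_countP (fun b _ => sum_weight_nonneg hk₄ b)
    (Nat.cast_nonneg k) hgood
  rw [sum_map_ffBins, ← FF_eq_length_ffBins] at this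
  nlinarith

end ffBins

/-! ### Comparison with an optimal packing -/

lemma exists_isFeasible_binsUsed_eq_OPT {k : ℕ} (hk : 1 ≤ k) {L : List ℝ} (hL : ∀ x ∈ L, x ≤ 1) :
    ∃ f : Fin L.length → ℕ, IsFeasible k L f ∧ binsUsed L f = OPT k L := by
  refine Nat.sInf_mem (s := {n | ∃ f : Fin L.length → ℕ, IsFeasible k L f ∧ binsUsed L f = n})
    ⟨_, Fin.val, fun b => ?_, rfl⟩
  have hcard : (Finset.univ.filter fun i : Fin L.length => i.1 = b).card ≤ 1 :=
    Finset.card_le_one.2 fun i hi j hj =>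
      Fin.ext ((Finset.mem_filter.1 hi).2.trans (Finset.mem_filter.1 hj).2.symm)
  refine ⟨hcard.trans hk, (Finset.sum_le_card_nsmul _ _ 1 fun i _ => hL _ (L.get_mem i)).trans ?_⟩
  simpa using hcard

lemma sum_map_le_mul_binsUsed {L : List ℝ} (f : Fin L.length → ℕ) (g : ℝ → ℝ) (c : ℝ)
    (h : ∀ b, ∑ i with f i = b, g (L.get i) ≤ c) : (L.map g).sum ≤ c * binsUsed L f := by
  have hsum : (L.map g).sum = ∑ i, g (L.get i) := (Fin.sum_univ_fun_getElem L g).symm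
  rw [hsum, ← Finset.sum_fiberwise_of_maps_to
    fun i _ => Finset.mem_image_of_mem f (Finset.mem_univ i), mul_comm, ← nsmul_eq_mul]
  exact Finset.sum_le_card_nsmul _ _ c fun b _ => h b

theorem sum_weight_le_mul_OPT {k : ℕ} (hk : 4 ≤ k) (hk' : k ≤ 14) {L : List ℝ}
    (hL : ValidInput L) : (L.map (weight k)).sum ≤ 8 * (k - 1) / 3 * OPT k L := by
  obtain ⟨f, hf, hopt⟩ := exists_isFeasible_binsUsed_eq_OPT (k := k) (by omega) fun x hx =>
    (hL x hx).2
  rw [← hopt]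
  refine sum_map_le_mul_binsUsed f (weight k) _ fun b => ?_
  have := sum_weight_le (k := k) (M := (Finset.univ.filter (fun i => f i = b)).val.map L.get)
    (by exact_mod_cast hk) (by exact_mod_cast hk') ?_ (hf b).2
    (by rw [Multiset.card_map]; exact_mod_cast (hf b).1)
  · rwa [Multiset.map_map] at this
  · intro x hx
    obtain ⟨i, -, rfl⟩ := Multiset.mem_map.1 hx
    exact (hL _ (List.get_mem L i)).1.le

end FirstFit

open FirstFit in
theorem ff_k678_ub_general (k : ℕ) (hk : 4 ≤ k) (hk' : k ≤ 8) (L : List ℝ) (hL : ValidInput L) :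
    (FF k L : ℝ) ≤ ((8 / 3 : ℝ) - 8 / (3 * k)) * (OPT k L : ℝ) + 6 := by
  have hk₀ : (0 : ℝ) < k := by exact_mod_cast (by omega : 0 < k)
  refine le_of_mul_le_mul_left ?_ hk₀
  calc (k * FF k L : ℝ)
      ≤ (L.map (weight k)).sum + 6 * k := mul_FF_le_sum_weight_add hk hk' fun x hx => (hL x hx).1
    _ ≤ 8 * (k - 1) / 3 * OPT k L + 6 * k := by
      gcongr
      exact sum_weight_le_mul_OPT hk (by omega) hL
    _ = k * ((8 / 3 - 8 / (3 * k)) * OPT k L + 6) := by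
      field_simp

/-- For k ∈ {6,7,8} and every input `L`,
FF(L) ≤ (8/3 − 8/(3k))·OPT(L) + 8: the asymptotic competitive ratio of First Fit
for 6 ≤ k ≤ 8 is at most 8(k−1)/(3k). -/
theorem ff_k678_ub (k : ℕ) (hk : k = 6 ∨ k = 7 ∨ k = 8) (L : List ℝ)
    (hL : ValidInput L) :
    (FF k L : ℝ) ≤ ((8 / 3 : ℝ) - 8 / (3 * k)) * (OPT k L : ℝ) + 8 := by
  linarith [ff_k678_ub_general k (by omega) (by omega) L hL]
end
end

section
/- For k = 9 and every input list L, First Fit with cardinality constraint k satisfies FF(L) ≤ (64/27)·OPT(L) + 7. Consequently, the asymptotic competitive ratio of First Fit for k = 9 is at most 64/27. -/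
/-!
The proof is a weighting argument. In units of 1/27 of a bin, an item of size `x` gets the weight
`weight x = 3 + bonus x`, where `bonus` is a piecewise linear function of the size.

*Any feasible bin weighs at most 64.* It holds at most 9 items, which contribute at most 27 through
the constant 3, so it is enough that items of total size at most 1 have total bonus at most 37. An
item larger than 1/2 has bonus 24, and items of total size at most 1/2 have total bonus at most 13:
on `(1/4, 1/2]` the bonus is defined as what 13 leaves after filling up to 1/2 with a small item,
and on small items it is superadditive. Without an item larger than 1/2, `bonus x ≤ 37 x` suffices.
Hence the total weight is at most `64 * OPT`.

*The `N` bins of First Fit weigh at least `27 N - 189` in total.* A bin with 9 items weighs at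
least 27. Taking the other bins in order of opening, let `t` be the smallest level of the earlier
ones, so that every item of the current bin exceeds `1 - t`. The weight of the current bin is at
least 27 minus the amount by which `potential` grows when `t` is replaced by the new minimum: a bin
that does not lower the minimum would be overfilled by a copy of its smallest item, and the weights
are such that this forces a weight of 27, up to a linear error when the minimum does drop. As
`potential` starts at 0 and stays at most 189, the losses telescope to at most 189.

Together, `27 * FF - 189 ≤ 64 * OPT`, and `189 / 27 = 7`.
-/

open scoped Classical
noncomputable section

/-! ### Weights against the optimal packing -/

section OptimalPacking

variable {k : ℕ} {L : List ℝ}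

lemma isFeasible_val (hk : 1 ≤ k) (hL : ∀ x ∈ L, x ≤ 1) :
    IsFeasible k L (fun i : Fin L.length => (i : ℕ)) := by
  intro b
  have hcard : (Finset.univ.filter fun i : Fin L.length => (i : ℕ) = b).card ≤ 1 :=
    Finset.card_le_one.2 fun i hi j hj =>
      Fin.ext ((Finset.mem_filter.1 hi).2.trans (Finset.mem_filter.1 hj).2.symm)
  refine ⟨hcard.trans hk, ?_⟩
  calc ∑ i ∈ Finset.univ.filter (fun i : Fin L.length => (i : ℕ) = b), L.get i
      ≤ (Finset.univ.filter fun i : Fin L.length => (i : ℕ) = b).card • (1 : ℝ) :=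
        Finset.sum_le_card_nsmul _ _ _ fun i _ => hL _ (L.get_mem i)
    _ ≤ 1 := by rw [nsmul_one]; exact_mod_cast hcard

lemma exists_isFeasible_binsUsed_eq_OPT (hk : 1 ≤ k) (hL : ∀ x ∈ L, x ≤ 1) :
    ∃ f : Fin L.length → ℕ, IsFeasible k L f ∧ binsUsed L f = OPT k L :=
  Nat.sInf_mem (s := {n | ∃ f : Fin L.length → ℕ, IsFeasible k L f ∧ binsUsed L f = n})
    ⟨_, _, isFeasible_val hk hL, rfl⟩

lemma IsFeasible.sum_map_le_mul_binsUsed {f : Fin L.length → ℕ} (hf : IsFeasible k L f)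
    {w : ℝ → ℝ} {c : ℝ}
    (hw : ∀ S : Finset (Fin L.length), S.card ≤ k → ∑ i ∈ S, L.get i ≤ 1 →
      ∑ i ∈ S, w (L.get i) ≤ c) :
    (L.map w).sum ≤ c * binsUsed L f :=
  calc (L.map w).sum
      = ∑ i, w (L.get i) := by simp
    _ = ∑ b ∈ Finset.univ.image f, ∑ i ∈ Finset.univ.filter (fun i => f i = b), w (L.get i) :=
        (Finset.sum_fiberwise_of_maps_to (fun i hi => Finset.mem_image_of_mem f hi) _).symm
    _ ≤ (Finset.univ.image f).card • c :=
        Finset.sum_le_card_nsmul _ _ _ fun b _ => hw _ (hf b).1 (hf b).2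
    _ = c * binsUsed L f := by rw [nsmul_eq_mul, mul_comm, binsUsed]

theorem sum_map_le_mul_OPT (hk : 1 ≤ k) (hL : ∀ x ∈ L, x ≤ 1) {w : ℝ → ℝ} {c : ℝ}
    (hw : ∀ S : Finset (Fin L.length), S.card ≤ k → ∑ i ∈ S, L.get i ≤ 1 →
      ∑ i ∈ S, w (L.get i) ≤ c) :
    (L.map w).sum ≤ c * OPT k L := by
  obtain ⟨f, hf, hopt⟩ := exists_isFeasible_binsUsed_eq_OPT hk hL
  exact hopt ▸ hf.sum_map_le_mul_binsUsed hw

end OptimalPacking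

/-! ### Weights against the First Fit packing -/

/-- One step of First Fit with cardinality constraint `k`, on bins recorded as the lists of their
items rather than by number of items and total size as in `ffUpdate`. -/
def firstFitStep (k : ℕ) (x : ℝ) : List (List ℝ) → List (List ℝ)
  | [] => [[x]]
  | B :: Bs => if B.length < k ∧ B.sum + x ≤ 1 then (x :: B) :: Bs else B :: firstFitStep k x Bs

/-- The packing of `L` by First Fit with cardinality constraint `k`: the list of its bins in order
of opening, each recorded as the list of its items. -/
def firstFitBins (k : ℕ) (L : List ℝ) : List (List ℝ) :=
  L.foldl (fun Bs x => firstFitStep k x Bs) []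

/-- The First Fit property of two bins `B`, `B'` opened in this order: unless `B` is full, no item
of `B'` fits into `B`. -/
def Refuses (k : ℕ) (B B' : List ℝ) : Prop := B.length = k ∨ ∀ y ∈ B', 1 - B.sum < y

/-- The properties of a First Fit packing, with bins listed in order of opening, on which weight
arguments rely. -/
structure IsFirstFit (k : ℕ) (Bs : List (List ℝ)) : Prop where
  ne_nil : ∀ B ∈ Bs, B ≠ []
  length_le : ∀ B ∈ Bs, B.length ≤ k
  pos : ∀ B ∈ Bs, ∀ y ∈ B, 0 < y
  refuses : Bs.Pairwise (Refuses k)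

section FirstFit

variable {k : ℕ} {x : ℝ} {B : List ℝ} {Bs : List (List ℝ)}

lemma ffUpdate_map (k : ℕ) (x : ℝ) (Bs : List (List ℝ)) :
    ffUpdate k x (Bs.map fun B => (B.length, B.sum)) =
      (firstFitStep k x Bs).map fun B => (B.length, B.sum) := by
  induction Bs with
  | nil => simp [ffUpdate, firstFitStep]
  | cons B Bs ih =>
    simp only [List.map_cons, ffUpdate, firstFitStep]
    split_ifs
    · simp [add_comm]
    · simp [ih]

lemma ffState_eq_map_firstFitBins (k : ℕ) (L : List ℝ) :
    ffState k L = (firstFitBins k L).map fun B => (B.length, B.sum) :=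
  List.foldl_hom (List.map fun B : List ℝ => (B.length, B.sum)) (init := [])
    fun Bs x => ffUpdate_map k x Bs

lemma length_firstFitBins (k : ℕ) (L : List ℝ) : (firstFitBins k L).length = FF k L := by
  rw [FF, ffState_eq_map_firstFitBins, List.length_map]

lemma flatten_firstFitStep_perm (k : ℕ) (x : ℝ) (Bs : List (List ℝ)) :
    (firstFitStep k x Bs).flatten.Perm (x :: Bs.flatten) := by
  induction Bs with
  | nil => simp [firstFitStep]
  | cons B Bs ih =>
    rw [firstFitStep]
    split_ifs
    · simp
    · exact (ih.append_left B).trans List.perm_middle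

lemma flatten_firstFitBins_perm (k : ℕ) (L : List ℝ) : (firstFitBins k L).flatten.Perm L := by
  induction L using List.reverseRecOn with
  | nil => simp [firstFitBins]
  | append_singleton L x ih =>
    rw [firstFitBins, List.foldl_concat]
    exact (flatten_firstFitStep_perm k x _).trans
      ((ih.cons x).trans (List.perm_append_singleton x L).symm)

lemma mem_firstFitStep (h : B ∈ firstFitStep k x Bs) :
    B ∈ Bs ∨ B = [x] ∨ ∃ C ∈ Bs, C.length < k ∧ B = x :: C := by
  induction Bs with
  | nil => simpa [firstFitStep] using h
  | cons C Cs ih =>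
    rw [firstFitStep] at h
    split_ifs at h with hfit <;> grind

lemma Refuses.cons_left {B' : List ℝ} (hx : 0 ≤ x) (hB : B.length < k) (h : Refuses k B B') :
    Refuses k (x :: B) B' := by
  refine Or.inr fun y hy => ?_
  have := h.resolve_left hB.ne y hy
  rw [List.sum_cons]
  linarith

lemma Refuses.cons_right {B' : List ℝ} (hx : B.length < k → 1 < B.sum + x) (hB : B.length ≤ k)
    (h : Refuses k B B') : Refuses k B (x :: B') := by
  refine hB.eq_or_lt.imp id fun hlt => List.forall_mem_cons.2 ⟨?_, h.resolve_left hlt.ne⟩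
  linarith [hx hlt]

lemma pairwise_refuses_firstFitStep (hx : 0 ≤ x) (hlen : ∀ B ∈ Bs, B.length ≤ k)
    (h : Bs.Pairwise (Refuses k)) : (firstFitStep k x Bs).Pairwise (Refuses k) := by
  induction Bs with
  | nil => simp [firstFitStep]
  | cons C Cs ih =>
    rw [List.pairwise_cons] at h
    rw [List.forall_mem_cons] at hlen
    rw [firstFitStep]
    split_ifs with hfit
    · exact List.pairwise_cons.2 ⟨fun B hB => (h.1 B hB).cons_left hx hfit.1, h.2⟩
    · have hnofit : C.length < k → 1 < C.sum + x := fun hlt => not_le.1 fun hle => hfit ⟨hlt, hle⟩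
      refine List.pairwise_cons.2 ⟨fun B hB => ?_, ih hlen.2 h.2⟩
      rcases mem_firstFitStep hB with hB | rfl | ⟨D, hD, -, rfl⟩
      · exact h.1 B hB
      · exact Refuses.cons_right hnofit hlen.1 (Or.inr (by simp))
      · exact (h.1 D hD).cons_right hnofit hlen.1

namespace IsFirstFit

lemma firstFitStep (hk : 1 ≤ k) (hx : 0 < x) (h : IsFirstFit k Bs) :
    IsFirstFit k (firstFitStep k x Bs) where
  ne_nil B hB := by
    rcases mem_firstFitStep hB with hB | rfl | ⟨C, -, -, rfl⟩
    · exact h.ne_nil B hB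
    · simp
    · simp
  length_le B hB := by
    rcases mem_firstFitStep hB with hB | rfl | ⟨C, -, hC, rfl⟩
    · exact h.length_le B hB
    · simpa using hk
    · simpa using hC
  pos B hB := by
    rcases mem_firstFitStep hB with hB | rfl | ⟨C, hC, -, rfl⟩
    · exact h.pos B hB
    · simpa using hx
    · exact List.forall_mem_cons.2 ⟨hx, h.pos C hC⟩
  refuses := pairwise_refuses_firstFitStep hx.le h.length_le h.refuses

lemma firstFitBins (hk : 1 ≤ k) {L : List ℝ} (hL : ∀ x ∈ L, 0 < x) :
    IsFirstFit k (firstFitBins k L) :=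
  List.foldlRecOn L _ ⟨by simp, by simp, by simp, by simp⟩
    fun _ h x hx => h.firstFitStep hk (hL x hx)

lemma tail (h : IsFirstFit k (B :: Bs)) : IsFirstFit k Bs where
  ne_nil C hC := h.ne_nil C (List.mem_cons_of_mem B hC)
  length_le C hC := h.length_le C (List.mem_cons_of_mem B hC)
  pos C hC := h.pos C (List.mem_cons_of_mem B hC)
  refuses := h.refuses.of_cons

/-- Here `t` stands for the smallest level of the non-full bins opened before those in `Bs`. -/
lemma mul_length_le_sum_map {w Φ : ℝ → ℝ} {c D : ℝ}
    (hfull : ∀ B : List ℝ, B.length = k → (∀ y ∈ B, 0 < y) → c ≤ (B.map w).sum)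
    (hstep : ∀ (B : List ℝ) (t : ℝ), B ≠ [] → (∀ y ∈ B, 0 < y) → (∀ y ∈ B, 1 - t < y) →
      c - (Φ (min B.sum t) - Φ t) ≤ (B.map w).sum)
    (hΦ : ∀ t, 0 ≤ t → Φ t ≤ D) (h : IsFirstFit k Bs) {t : ℝ} (ht : 0 ≤ t)
    (hroom : ∀ B ∈ Bs, ∀ y ∈ B, 1 - t < y) :
    c * Bs.length - (D - Φ t) ≤ (Bs.flatten.map w).sum := by
  induction Bs generalizing t with
  | nil => simpa using hΦ t ht
  | cons B Bs ih =>
    obtain ⟨hroomB, hroomBs⟩ := List.forall_mem_cons.1 hroom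
    have hpos := h.pos B List.mem_cons_self
    rw [List.length_cons, Nat.cast_succ, List.flatten_cons, List.map_append, List.sum_append]
    by_cases hk : B.length = k
    · linarith [hfull B hk hpos, ih h.tail ht hroomBs]
    · have hmin : 0 ≤ min B.sum t := le_min (List.sum_nonneg fun y hy => (hpos y hy).le) ht
      have hroom' : ∀ C ∈ Bs, ∀ y ∈ C, 1 - min B.sum t < y := fun C hC y hy => by
        have hB : 1 - B.sum < y := ((List.pairwise_cons.1 h.refuses).1 C hC).resolve_left hk y hy
        rw [sub_lt_comm, lt_min_iff]
        exact ⟨sub_lt_comm.1 hB, sub_lt_comm.1 (hroomBs C hC y hy)⟩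
      linarith [hstep B t (h.ne_nil B List.mem_cons_self) hpos hroomB,
        ih h.tail hmin hroom']

end IsFirstFit

/-- A function `Φ` of the smallest level of the non-full bins opened so far pays for the bins of
weight less than `c`; its growth telescopes. -/
theorem mul_FF_le_sum_map (hk : 1 ≤ k) {L : List ℝ} (hL : ∀ x ∈ L, 0 < x) {w Φ : ℝ → ℝ} {c D : ℝ}
    (hfull : ∀ B : List ℝ, B.length = k → (∀ y ∈ B, 0 < y) → c ≤ (B.map w).sum)
    (hstep : ∀ (B : List ℝ) (t : ℝ), B ≠ [] → (∀ y ∈ B, 0 < y) → (∀ y ∈ B, 1 - t < y) →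
      c - (Φ (min B.sum t) - Φ t) ≤ (B.map w).sum)
    (hΦ : ∀ t, 0 ≤ t → Φ t ≤ D) :
    c * FF k L - (D - Φ 1) ≤ (L.map w).sum := by
  have h := IsFirstFit.firstFitBins hk hL
  rw [← length_firstFitBins, ← ((flatten_firstFitBins_perm k L).map w).sum_eq]
  exact h.mul_length_le_sum_map hfull hstep hΦ zero_le_one
    fun B hB y hy => by simpa using h.pos B hB y hy

end FirstFit

/-! ### The weight function -/

/-- The size-dependent part of the weight of an item of size at most 1/4. -/
def smallBonus (x : ℝ) : ℝ := min (max (max (10 * x) (20 * x - 5 / 6)) (40 * x - 25 / 6)) (20 * x)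

/-- The size-dependent part of the weight of an item of size `x`, in units of 1/27 of a bin. The
pieces on `(0, 1/4]` and `(1/4, 1/2]` are chosen so that `bonus x + bonus (1/2 - x) = 13` for
`1/4 < x < 1/2`, while `bonus x + bonus (1 - 2 x) = 21` for `1/4 < x ≤ 1/3`; two items weighing 27
in total have total bonus 21. -/
def bonus (x : ℝ) : ℝ :=
  if x ≤ 1 / 4 then smallBonus x else if x ≤ 1 / 2 then 13 - smallBonus (1 / 2 - x) else 24

/-- The weight of an item of size `x`, in units of 1/27 of a bin. -/
def weight (x : ℝ) : ℝ := 3 + bonus x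

lemma smallBonus_mono : Monotone smallBonus := fun x y h => by
  unfold smallBonus
  gcongr

lemma smallBonus_le (x : ℝ) : smallBonus x ≤ 20 * x := min_le_right _ _

lemma smallBonus_nonneg {x : ℝ} (hx : 0 ≤ x) : 0 ≤ smallBonus x :=
  le_min (le_max_of_le_left (le_max_of_le_left (by linarith))) (by linarith)

lemma mul_smallBonus_le_mul_smallBonus {x y : ℝ} (hx : 0 ≤ x) (hxy : x ≤ y) :
    y * smallBonus x ≤ x * smallBonus y := by
  unfold smallBonus
  rw [mul_min_of_nonneg _ _ hx, mul_max_of_nonneg _ _ hx, mul_max_of_nonneg _ _ hx,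
    mul_min_of_nonneg _ _ (hx.trans hxy), mul_max_of_nonneg _ _ (hx.trans hxy),
    mul_max_of_nonneg _ _ (hx.trans hxy)]
  gcongr min (max (max ?_ ?_) ?_) ?_ <;> linarith

/-- Superadditivity holds because `smallBonus x / x` is nondecreasing. -/
lemma sum_smallBonus_le_smallBonus_sum {ι : Type*} {S : Finset ι} {g : ι → ℝ}
    (hg : ∀ i ∈ S, 0 ≤ g i) : ∑ i ∈ S, smallBonus (g i) ≤ smallBonus (∑ i ∈ S, g i) := by
  rcases (Finset.sum_nonneg hg).eq_or_lt with hzero | hpos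
  · rw [← hzero]
    refine (Finset.sum_nonpos fun i hi => ?_).trans (smallBonus_nonneg le_rfl)
    linarith [smallBonus_le (g i), (Finset.sum_eq_zero_iff_of_nonneg hg).1 hzero.symm i hi]
  · refine le_of_mul_le_mul_left ?_ hpos
    rw [Finset.mul_sum, Finset.sum_mul]
    exact Finset.sum_le_sum fun i hi =>
      mul_smallBonus_le_mul_smallBonus (hg i hi) (Finset.single_le_sum hg hi)

section Bonus

variable {x : ℝ}

lemma bonus_of_le_quarter (hx : x ≤ 1 / 4) : bonus x = smallBonus x := if_pos hx

lemma bonus_of_le_half (hx : 1 / 4 < x) (hx' : x ≤ 1 / 2) :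
    bonus x = 13 - smallBonus (1 / 2 - x) := by
  rw [bonus, if_neg hx.not_ge, if_pos hx']

lemma bonus_of_half_lt (hx : 1 / 2 < x) : bonus x = 24 := by
  rw [bonus, if_neg (by linarith), if_neg hx.not_ge]

lemma bonus_nonneg (hx : 0 ≤ x) : 0 ≤ bonus x := by
  unfold bonus
  split_ifs with h₁ h₂
  · exact smallBonus_nonneg hx
  · linarith [smallBonus_le (1 / 2 - x)]
  · norm_num

lemma bonus_le_mul (hx : 0 ≤ x) (hx' : x ≤ 1 / 2) : bonus x ≤ 37 * x := by
  unfold bonus smallBonus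
  grind

lemma twenty_mul_sub_le_bonus (hx : x ≤ 1 / 2) : 20 * x - 5 / 6 ≤ bonus x := by
  unfold bonus smallBonus
  grind

lemma thirty_mul_sub_le_bonus (hx : x ≤ 1 / 4) : 30 * x - 5 / 2 ≤ bonus x := by
  unfold bonus smallBonus
  grind

lemma min_le_bonus (hx : x ≤ 1 / 4) : min (40 * x - 25 / 6) (20 * x) ≤ bonus x := by
  rw [bonus_of_le_quarter hx]
  exact min_le_min_right _ (le_max_right _ _)

lemma twenty_mul_add_three_le_bonus (hx : 1 / 4 < x) (hx' : x ≤ 1 / 2) :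
    20 * x + 3 ≤ bonus x := by
  linarith [bonus_of_le_half hx hx', smallBonus_le (1 / 2 - x)]

lemma forty_mul_sub_le_bonus (hx : 1 / 4 < x) (hx' : x ≤ 1 / 3) : 40 * x - 17 / 6 ≤ bonus x := by
  unfold bonus smallBonus
  grind

lemma twenty_mul_add_le_bonus (hx : 1 / 3 ≤ x) (hx' : x ≤ 5 / 12) :
    20 * x + 23 / 6 ≤ bonus x := by
  unfold bonus smallBonus
  grind

lemma ten_mul_add_le_bonus (hx : 5 / 12 ≤ x) (hx' : x ≤ 1 / 2) : 10 * x + 8 ≤ bonus x := by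
  unfold bonus smallBonus
  grind

end Bonus

/-! ### Feasible bins weigh at most 64 -/

section FeasibleBin

variable {ι : Type*} {S : Finset ι} {g : ι → ℝ}

lemma sum_bonus_le_of_sum_le_half (hg : ∀ i ∈ S, 0 ≤ g i) (hs : ∑ i ∈ S, g i ≤ 1 / 2) :
    ∑ i ∈ S, bonus (g i) ≤ 13 := by
  by_cases hbig : ∃ i ∈ S, 1 / 4 < g i
  · obtain ⟨i, hi, hgi⟩ := hbig
    have hrest : ∀ j ∈ S.erase i, 0 ≤ g j := fun j hj => hg j (Finset.mem_of_mem_erase hj)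
    rw [← Finset.add_sum_erase S _ hi] at hs ⊢
    have hsmall : ∑ j ∈ S.erase i, bonus (g j) ≤ smallBonus (1 / 2 - g i) :=
      calc ∑ j ∈ S.erase i, bonus (g j)
          = ∑ j ∈ S.erase i, smallBonus (g j) := Finset.sum_congr rfl fun j hj =>
            bonus_of_le_quarter (by linarith [Finset.single_le_sum hrest hj])
        _ ≤ smallBonus (∑ j ∈ S.erase i, g j) := sum_smallBonus_le_smallBonus_sum hrest
        _ ≤ smallBonus (1 / 2 - g i) := smallBonus_mono (by linarith)
    linarith [bonus_of_le_half hgi (by linarith [Finset.sum_nonneg hrest])]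
  · push Not at hbig
    calc ∑ i ∈ S, bonus (g i)
        ≤ ∑ i ∈ S, 20 * g i := Finset.sum_le_sum fun i hi =>
          (bonus_of_le_quarter (hbig i hi)).trans_le (smallBonus_le _)
      _ = 20 * ∑ i ∈ S, g i := (Finset.mul_sum _ _ _).symm
      _ ≤ 13 := by linarith

lemma sum_bonus_le_of_sum_le_one (hg : ∀ i ∈ S, 0 ≤ g i) (hs : ∑ i ∈ S, g i ≤ 1) :
    ∑ i ∈ S, bonus (g i) ≤ 37 := by
  by_cases hbig : ∃ i ∈ S, 1 / 2 < g i
  · obtain ⟨i, hi, hgi⟩ := hbig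
    rw [← Finset.add_sum_erase S _ hi] at hs ⊢
    linarith [bonus_of_half_lt hgi, sum_bonus_le_of_sum_le_half (S := S.erase i)
      (fun j hj => hg j (Finset.mem_of_mem_erase hj)) (by linarith)]
  · push Not at hbig
    calc ∑ i ∈ S, bonus (g i)
        ≤ ∑ i ∈ S, 37 * g i := Finset.sum_le_sum fun i hi => bonus_le_mul (hg i hi) (hbig i hi)
      _ = 37 * ∑ i ∈ S, g i := (Finset.mul_sum _ _ _).symm
      _ ≤ 37 := by linarith

lemma sum_weight_le (hg : ∀ i ∈ S, 0 ≤ g i) (hcard : S.card ≤ 9) (hs : ∑ i ∈ S, g i ≤ 1) :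
    ∑ i ∈ S, weight (g i) ≤ 64 := by
  have hcard' : (S.card : ℝ) ≤ 9 := by exact_mod_cast hcard
  simp only [weight, Finset.sum_add_distrib, Finset.sum_const, nsmul_eq_mul]
  linarith [sum_bonus_le_of_sum_le_one hg hs]

end FeasibleBin

/-! ### First Fit bins weigh 27, up to the potential -/

/-- The potential paying for bins of weight below 27, as a function of the lowest level of a
non-full bin opened so far. The jump at 3/4 pays for a first bin of level at most 3/4 that contains
an item of size at most 1/4, and the jump at 1/2 for a first bin of level at most 1/2; the linear
part pays for bins that lower the minimum within one of the remaining ranges. -/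
def potential (t : ℝ) : ℝ :=
  135 * (1 - t) + (if t ≤ 3 / 4 then 27 else 0) + (if t ≤ 1 / 2 then 27 else 0)

lemma potential_le {t : ℝ} (ht : 0 ≤ t) : potential t ≤ 189 := by
  unfold potential
  split_ifs <;> linarith

lemma potential_one : potential 1 = 0 := by norm_num [potential]

section Potential

variable {s t : ℝ}

lemma mul_sub_le_potential_sub (h : s ≤ t) : 135 * (t - s) ≤ potential s - potential t := by
  unfold potential
  split_ifs <;> linarith

lemma le_potential_sub_of_half (hs : s ≤ 1 / 2) (ht : 1 / 2 < t) :
    27 ≤ potential s - potential t := by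
  unfold potential
  split_ifs <;> linarith

lemma le_potential_sub_of_three_quarters (hs : s ≤ 3 / 4) (ht : 3 / 4 < t) :
    27 ≤ potential s - potential t := by
  unfold potential
  split_ifs <;> linarith

end Potential

section FirstFitBin

variable {a b c d E : ℝ} {B : List ℝ}

/-- In this and the following lemmas, `E` bounds the room that is left in the bin when a copy of its
smallest item is added. -/
lemma sub_mul_le_weight_two (ha : 1 / 4 < a) (hab : a ≤ b) (hb : b ≤ 1 / 2)
    (hE : 0 ≤ E) (hroom : 1 - (a + b) - a ≤ E) : 27 - 135 * E ≤ weight a + weight b := by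
  unfold weight
  rcases le_or_gt (5 / 12) b with hb₁ | hb₁
  · linarith [twenty_mul_add_three_le_bonus ha (hab.trans hb), ten_mul_add_le_bonus hb₁ hb]
  rcases le_or_gt b (1 / 3) with hb₂ | hb₂
  · linarith [forty_mul_sub_le_bonus ha (hab.trans hb₂),
      forty_mul_sub_le_bonus (ha.trans_le hab) hb₂]
  have hb_bonus := twenty_mul_add_le_bonus hb₂.le hb₁.le
  rcases le_or_gt a (1 / 3) with ha₁ | ha₁
  · linarith [forty_mul_sub_le_bonus ha ha₁]
  · linarith [twenty_mul_add_le_bonus ha₁.le (hab.trans hb₁.le)]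

lemma sub_mul_le_weight_three (hab : a ≤ b) (hbc : b ≤ c) (hc : c ≤ 1 / 2)
    (hs : 3 / 4 < a + b + c) (hE : 0 ≤ E) (hroom : 1 - (a + b + c) - a ≤ E) :
    27 - 135 * E ≤ weight a + weight b + weight c := by
  unfold weight
  have hc_bonus := twenty_mul_add_three_le_bonus (x := c) (by linarith) hc
  rcases le_or_gt b (1 / 4) with hb | hb
  · linarith [thirty_mul_sub_le_bonus (hab.trans hb), thirty_mul_sub_le_bonus hb]
  · linarith [twenty_mul_sub_le_bonus (hab.trans (hbc.trans hc)),
      twenty_mul_add_three_le_bonus hb (hbc.trans hc)]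

/-- Tight for `E = 0` and sizes `1/6, 1/6, 1/4, 1/4`: without an item larger than 1/4, the linear
minorant `20 * x - 5 / 6` is not enough. -/
lemma sub_mul_le_weight_four (hab : a ≤ b) (hbc : b ≤ c) (hcd : c ≤ d) (hd : d ≤ 1 / 2)
    (hE : 0 ≤ E) (hroom : 1 - (a + b + c + d) - a ≤ E) :
    27 - 135 * E ≤ weight a + weight b + weight c + weight d := by
  unfold weight
  rcases le_or_gt d (1 / 4) with hd' | hd'
  · have hc' := hcd.trans hd'
    have hb' := hbc.trans hc'
    rcases min_le_iff.1 (min_le_bonus (hab.trans hb')) with ha_bonus | ha_bonus <;>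
    rcases min_le_iff.1 (min_le_bonus hb') with hb_bonus | hb_bonus <;>
    rcases min_le_iff.1 (min_le_bonus hc') with hc_bonus | hc_bonus <;>
    rcases min_le_iff.1 (min_le_bonus hd') with hd_bonus | hd_bonus <;>
    linarith
  · have hc := hcd.trans hd
    have hb := hbc.trans hc
    linarith [twenty_mul_sub_le_bonus (hab.trans hb), twenty_mul_sub_le_bonus hb,
      twenty_mul_sub_le_bonus hc, twenty_mul_add_three_le_bonus hd' hd]

lemma sub_mul_le_sum_map_weight_of_five_le_length (hlen : 5 ≤ B.length) (hhalf : ∀ y ∈ B, y ≤ 1 / 2)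
    (hs : 0 ≤ B.sum) (hE : 0 ≤ E) (hroom : ∀ y ∈ B, 1 - B.sum - y ≤ E) :
    27 - 135 * E ≤ (B.map weight).sum := by
  have hlen' : (5 : ℝ) ≤ B.length := by exact_mod_cast hlen
  have hlinear : 13 / 6 * B.length + 20 * B.sum ≤ (B.map weight).sum :=
    calc 13 / 6 * (B.length : ℝ) + 20 * B.sum
        = (B.map fun y => 13 / 6 + 20 * y).sum := by
          rw [List.sum_map_add, List.map_const', List.sum_replicate, nsmul_eq_mul,
            List.sum_map_mul_left, List.map_id', mul_comm]
      _ ≤ (B.map weight).sum := List.sum_le_sum fun y hy => by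
          linarith [weight.eq_1 y, twenty_mul_sub_le_bonus (hhalf y hy)]
  have haverage : B.length * (1 - B.sum - E) ≤ B.sum := by
    rw [← nsmul_eq_mul]
    exact List.card_nsmul_le_sum B _ fun y hy => by linarith [hroom y hy]
  have hlevel : 5 * (1 - E) ≤ 6 * B.sum := by
    rcases le_total 0 (1 - B.sum - E) with h | h
    · linarith [mul_le_mul_of_nonneg_right hlen' h]
    · linarith
  linarith

lemma sub_mul_le_sum_map_weight_of_pairwise_le (hsort : B.Pairwise (· ≤ ·))
    (hhalf : ∀ y ∈ B, y ≤ 1 / 2) (hs : 1 / 2 < B.sum)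
    (hq : 3 / 4 < B.sum ∨ ∀ y ∈ B, 1 / 4 < y) (hE : 0 ≤ E)
    (hroom : ∀ y ∈ B, 1 - B.sum - y ≤ E) : 27 - 135 * E ≤ (B.map weight).sum := by
  by_cases hlen : 5 ≤ B.length
  · exact sub_mul_le_sum_map_weight_of_five_le_length hlen hhalf (by linarith) hE hroom
  match B with
  | [] => norm_num at hs
  | [a] =>
    simp only [List.forall_mem_singleton, List.sum_singleton] at hhalf hs
    linarith
  | [a, b] =>
    simp only [List.pairwise_cons, List.forall_mem_cons, List.map_cons, List.sum_cons,
      List.map_nil, List.sum_nil] at *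
    have ha : 1 / 4 < a := hq.elim (fun hs' => by linarith) And.left
    linarith [sub_mul_le_weight_two ha hsort.1.1 hhalf.2.1 hE (by linarith)]
  | [a, b, c] =>
    simp only [List.pairwise_cons, List.forall_mem_cons, List.map_cons, List.sum_cons,
      List.map_nil, List.sum_nil] at *
    have hs' : 3 / 4 < a + b + c := by rcases hq with hs' | hq' <;> linarith
    linarith [sub_mul_le_weight_three hsort.1.1 hsort.2.1.1 hhalf.2.2.1 hs' hE (by linarith)]
  | [a, b, c, d] =>
    simp only [List.pairwise_cons, List.forall_mem_cons, List.map_cons, List.sum_cons,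
      List.map_nil, List.sum_nil] at *
    linarith [sub_mul_le_weight_four hsort.1.1 hsort.2.1.1 hsort.2.2.1.1 hhalf.2.2.2.1 hE
      (by linarith)]
  | _ :: _ :: _ :: _ :: _ :: _ => simp at hlen

/-- A bin of level at most 1/2, or of level at most 3/4 with an item of size at most 1/4, is
excluded because it may weigh less: it can occur only once in a First Fit packing. -/
lemma sub_mul_le_sum_map_weight (hhalf : ∀ y ∈ B, y ≤ 1 / 2) (hs : 1 / 2 < B.sum)
    (hq : 3 / 4 < B.sum ∨ ∀ y ∈ B, 1 / 4 < y) (hE : 0 ≤ E)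
    (hroom : ∀ y ∈ B, 1 - B.sum - y ≤ E) : 27 - 135 * E ≤ (B.map weight).sum := by
  have hperm := List.perm_insertionSort (· ≤ ·) B
  rw [← (hperm.map weight).sum_eq]
  refine sub_mul_le_sum_map_weight_of_pairwise_le (List.pairwise_insertionSort _ B)
    ?_ ?_ ?_ hE ?_ <;> simpa only [hperm.mem_iff, hperm.sum_eq]

lemma three_le_weight {x : ℝ} (hx : 0 ≤ x) : 3 ≤ weight x :=
  le_add_of_nonneg_right (bonus_nonneg hx)

lemma three_mul_length_le_sum_map_weight (hpos : ∀ y ∈ B, 0 < y) :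
    3 * (B.length : ℝ) ≤ (B.map weight).sum := by
  have := List.card_nsmul_le_sum (B.map weight) 3
    (List.forall_mem_map.2 fun y hy => three_le_weight (hpos y hy).le)
  rwa [List.length_map, nsmul_eq_mul, mul_comm] at this

lemma le_sum_map_weight_of_length_eq_nine (hlen : B.length = 9) (hpos : ∀ y ∈ B, 0 < y) :
    27 ≤ (B.map weight).sum :=
  calc (27 : ℝ) = 3 * B.length := by rw [hlen]; norm_num
    _ ≤ (B.map weight).sum := three_mul_length_le_sum_map_weight hpos

lemma le_sum_map_weight_of_half_lt (hpos : ∀ y ∈ B, 0 < y) {y : ℝ} (hy : y ∈ B)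
    (hbig : 1 / 2 < y) : 27 ≤ (B.map weight).sum :=
  calc (27 : ℝ) = weight y := by rw [weight, bonus_of_half_lt hbig]; norm_num
    _ ≤ (B.map weight).sum := List.single_le_sum
        (List.forall_mem_map.2 fun z hz => by linarith [three_le_weight (hpos z hz).le])
        _ (List.mem_map_of_mem hy)

lemma sub_potential_le_sum_map_weight {t : ℝ} (hne : B ≠ []) (hpos : ∀ y ∈ B, 0 < y)
    (hroom : ∀ y ∈ B, 1 - t < y) :
    27 - (potential (min B.sum t) - potential t) ≤ (B.map weight).sum := by
  have hweight : 0 ≤ (B.map weight).sum :=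
    (by positivity : (0 : ℝ) ≤ 3 * B.length).trans (three_mul_length_le_sum_map_weight hpos)
  have hmin : min B.sum t ≤ t := min_le_right _ _
  have hgrowth := mul_sub_le_potential_sub hmin
  by_cases hbig : ∃ y ∈ B, 1 / 2 < y
  · obtain ⟨y, hy, hlt⟩ := hbig
    linarith [le_sum_map_weight_of_half_lt hpos hy hlt]
  push Not at hbig
  rcases le_or_gt B.sum (1 / 2) with hs | hs
  · obtain ⟨y, hy⟩ := List.exists_mem_of_ne_nil B hne
    have ht : 1 / 2 < t := by linarith [hroom y hy, hbig y hy]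
    linarith [le_potential_sub_of_half ((min_le_left B.sum t).trans hs) ht]
  by_cases hq : 3 / 4 < B.sum ∨ ∀ y ∈ B, 1 / 4 < y
  · have hroom' : ∀ y ∈ B, 1 - B.sum - y ≤ t - min B.sum t := fun y hy => by
      linarith [hroom y hy, min_le_left B.sum t]
    linarith [sub_mul_le_sum_map_weight hbig hs hq (sub_nonneg.2 hmin) hroom']
  · push Not at hq
    obtain ⟨hs', y, hy, hsmall⟩ := hq
    have ht : 3 / 4 < t := by linarith [hroom y hy]
    linarith [le_potential_sub_of_three_quarters ((min_le_left B.sum t).trans hs') ht]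

end FirstFitBin

/-- For k = 9 and every input `L`, FF(L) ≤ (64/27)·OPT(L) + 7: the
asymptotic competitive ratio of First Fit for k = 9 is at most 64/27. -/
theorem ff_k9_ub (L : List ℝ) (hL : ValidInput L) :
    (FF 9 L : ℝ) ≤ (64 / 27 : ℝ) * (OPT 9 L : ℝ) + 7 := by
  have hopt : (L.map weight).sum ≤ 64 * OPT 9 L :=
    sum_map_le_mul_OPT (by norm_num) (fun x hx => (hL x hx).2) fun S hcard hs =>
      sum_weight_le (fun i _ => (hL _ (L.get_mem i)).1.le) hcard hs
  have hff : 27 * FF 9 L - (189 - potential 1) ≤ (L.map weight).sum :=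
    mul_FF_le_sum_map (by norm_num) (fun x hx => (hL x hx).1)
      (fun _ => le_sum_map_weight_of_length_eq_nine)
      (fun _ _ => sub_potential_le_sum_map_weight) (fun _ => potential_le)
  rw [potential_one] at hff
  linarith
end
end

section
/- For every integer k with 5 ≤ k ≤ 10, every ε > 0 and every N, there exists an input list L such that OPT(L) ≥ N and FF(L) ≥ (8(k−1)/(3k) − ε)·OPT(L), where FF is First Fit with cardinality constraint k. Consequently, the asymptotic competitive ratio of First Fit for 5 ≤ k ≤ 10 is at least 8(k−1)/(3k). -/
/-!
The input consists of tiny items, items of size about `1/4` and `1/2`, and items slightly larger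
than `1/2`. Up to small perturbations, an optimal packing has three equally frequent kinds of
bins: twice `{1/2+, 1/4, 1/4}` and once `{1/2+, 1/2-}`, all filled up with tiny items to `k`
items. So three bins contain `3k - 8` tiny items, four of size about `1/4`, one `1/2-` and three
`1/2+`. First Fit receives the tiny items first and puts `k` of them into each bin; it then packs
bins `{1/4, 1/4, 1/4}`, bins `{1/2-, 1/4+}`, and finally each `1/2+` alone. This costs
`(3k - 8)/k + 1 + 1 + 3 = 8(k - 1)/k` bins per three optimal bins.

The perturbations must ensure that a First Fit bin with three items near `1/4` does not accept
any later item, although each item near `1/4` has a partner with which its size is strictly below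
`1/2`. With `b_j` decreasing geometrically and `u` negligible against all `b_j`, the `j`-th triple
is `1/4 + b_j - 2u`, `1/4 - b_{j+1}`, `1/4 - 4u`. Its size `3/4 + 2 b_{j+1} - 6u` blocks all later
items, whereas the optimum pairs `1/4 + b_j - 2u` with the item `1/4 - b_j` of the previous triple,
and `1/4 - 4u` with the item `1/4 + 2u` of a bin `{1/2-, 1/4+}`. The shift by one index costs a
single additional optimal bin.
-/

open scoped Classical
noncomputable section

/-! ### Bounding the optimum -/

/-- The items listed in `G` can share a bin under the cardinality constraint `k`. -/
structure FitsInBin (k : ℕ) (G : List ℝ) : Prop where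
  length_le : G.length ≤ k
  sum_le : G.sum ≤ 1

theorem exists_fiber_map_get_eq {α ι : Type*} [Fintype ι] (L : List α) (B : ι → Multiset α)
    (hL : (L : Multiset α) = ∑ i, B i) :
    ∃ f : Fin L.length → ι, ∀ i, (Finset.univ.filter (f · = i)).val.map L.get = B i := by
  induction L generalizing B with
  | nil =>
    have hB : ∀ i, B i = 0 := by simpa [eq_comm (a := (0 : Multiset α))] using hL
    exact ⟨Fin.elim0, fun i => by simp [hB]⟩
  | cons a L ih =>
    obtain ⟨i₀, -, ha⟩ : ∃ i₀ ∈ Finset.univ, a ∈ B i₀ := by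
      rw [← Multiset.mem_sum, ← hL]; simp
    obtain ⟨C, hC⟩ := Multiset.exists_cons_of_mem ha
    have hB : B = fun i => (if i₀ = i then {a} else 0) + Function.update B i₀ C i := by
      funext i
      obtain rfl | hi := eq_or_ne i₀ i
      · simp [hC]
      · simp [hi, hi.symm]
    obtain ⟨f, hf⟩ := ih (Function.update B i₀ C) (by
      rw [hB, Finset.sum_add_distrib] at hL
      simpa [← Multiset.cons_coe, ← Multiset.singleton_add] using hL)
    refine ⟨Fin.cons i₀ f, fun i => ?_⟩
    rw [congrFun hB i, ← hf i]
    simp only [List.length_cons, Fin.univ_succ, Finset.filter_cons, Finset.filter_map,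
      Fin.cons_zero]
    by_cases hi : i₀ = i <;> simp [hi, -Fin.univ_val_map, -Finset.filter_val]

theorem coe_flatten_eq_sum {α : Type*} (Gs : List (List α)) :
    (Gs.flatten : Multiset α) = (Gs.map (↑)).sum := by
  rw [← Multiset.coe_join, Multiset.join, Multiset.sum_coe]

theorem exists_isFeasible_of_perm_flatten {k : ℕ} {L : List ℝ} {Bs : List (List ℝ)}
    (hperm : L.Perm Bs.flatten) (hBs : ∀ B ∈ Bs, FitsInBin k B) :
    ∃ f, IsFeasible k L f ∧ binsUsed L f ≤ Bs.length := by
  obtain ⟨f, hf⟩ := exists_fiber_map_get_eq L (fun i : Fin Bs.length => (Bs[i] : Multiset ℝ)) (by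
    rw [Multiset.coe_eq_coe.mpr hperm, coe_flatten_eq_sum]
    exact (Fin.sum_univ_fun_getElem Bs (fun B => (B : Multiset ℝ))).symm)
  refine ⟨fun i => f i, fun b => ?_, ?_⟩
  · by_cases hb : b < Bs.length
    · have hfits : FitsInBin k Bs[b] := hBs _ (List.getElem_mem hb)
      have hfiber : (Finset.univ.filter fun i => (f i : ℕ) = b).val.map L.get = Bs[b] :=
        Eq.trans (by simp only [Fin.ext_iff]) (hf ⟨b, hb⟩)
      constructor
      · calc _ = (Bs[b] : Multiset ℝ).card := by rw [← hfiber, Multiset.card_map, Finset.card_val]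
          _ ≤ k := hfits.length_le
      · calc _ = (Bs[b] : Multiset ℝ).sum := by rw [← hfiber]; rfl
          _ ≤ 1 := by rw [Multiset.sum_coe]; exact hfits.sum_le
    · have hempty : Finset.univ.filter (fun i => (f i : ℕ) = b) = ∅ :=
        Finset.filter_eq_empty_iff.mpr fun i _ hi => hb (hi ▸ (f i).isLt)
      simp [hempty]
  · calc binsUsed L (fun i => f i) ≤ (Finset.range Bs.length).card :=
          Finset.card_le_card (Finset.image_subset_iff.mpr fun i _ => by simp)
      _ = Bs.length := Finset.card_range _

theorem OPT_le_length {k : ℕ} {L : List ℝ} {Bs : List (List ℝ)} (hperm : L.Perm Bs.flatten)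
    (hBs : ∀ B ∈ Bs, FitsInBin k B) : OPT k L ≤ Bs.length := by
  obtain ⟨f, hf, hbins⟩ := exists_isFeasible_of_perm_flatten hperm hBs
  have hOPT : OPT k L ≤ binsUsed L f := Nat.sInf_le ⟨f, hf, rfl⟩
  exact hOPT.trans hbins

theorem exists_isFeasible {k : ℕ} {L : List ℝ} (hk : 1 ≤ k) (hL : ∀ x ∈ L, x ≤ 1) :
    ∃ f, IsFeasible k L f := by
  have hfits : ∀ B ∈ L.map ([·]), FitsInBin k B :=
    List.forall_mem_map.mpr fun x hx => ⟨hk, List.sum_singleton.trans_le (hL x hx)⟩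
  have hflatten : (L.map ([·])).flatten = L := by rw [← List.flatMap_def, List.flatMap_singleton']
  obtain ⟨f, hf, -⟩ := exists_isFeasible_of_perm_flatten (.of_eq hflatten.symm) hfits
  exact ⟨f, hf⟩

theorem length_le_mul_OPT {k : ℕ} {L : List ℝ} (hk : 1 ≤ k) (hL : ∀ x ∈ L, x ≤ 1) :
    L.length ≤ k * OPT k L := by
  -- Without a feasible packing, `OPT` would be the junk value `sInf ∅ = 0`.
  obtain ⟨f, hf⟩ := exists_isFeasible hk hL
  obtain ⟨g, hg, hgOPT⟩ : ∃ g, IsFeasible k L g ∧ binsUsed L g = OPT k L :=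
    Nat.sInf_mem (s := {n | ∃ g, IsFeasible k L g ∧ binsUsed L g = n}) ⟨_, f, hf, rfl⟩
  simpa [← hgOPT, binsUsed] using
    Finset.card_le_mul_card_image (f := g) Finset.univ k fun b _ => (hg b).1

/-! ### First Fit -/

/-- The record `(number of items, total size)` that First Fit keeps of a bin with content `G`. -/
def load (G : List ℝ) : ℕ × ℝ := (G.length, G.sum)

/-- First Fit's test whether a bin with record `b` can receive an item of size `x`. -/
abbrev Accepts (k : ℕ) (b : ℕ × ℝ) (x : ℝ) : Prop := b.1 < k ∧ b.2 + x ≤ 1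

theorem ffUpdate_append {k : ℕ} {x : ℝ} {bs : List (ℕ × ℝ)} (cs : List (ℕ × ℝ))
    (h : ∀ b ∈ bs, ¬ Accepts k b x) : ffUpdate k x (bs ++ cs) = bs ++ ffUpdate k x cs := by
  induction bs with
  | nil => rfl
  | cons b bs ih =>
    obtain ⟨hb, hbs⟩ := List.forall_mem_cons.mp h
    rw [List.cons_append, ffUpdate, if_neg hb, ih hbs, List.cons_append]

theorem ffState_concat (k : ℕ) (S : List ℝ) (x : ℝ) :
    ffState k (S ++ [x]) = ffUpdate k x (ffState k S) := by
  simp only [ffState, List.foldl_append, List.foldl_cons, List.foldl_nil]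

theorem ffState_append {k : ℕ} {S T : List ℝ}
    (h : ∀ b ∈ ffState k S, ∀ x ∈ T, ¬ Accepts k b x) :
    ffState k (S ++ T) = ffState k S ++ ffState k T := by
  induction T using List.reverseRecOn with
  | nil => simp [ffState]
  | append_singleton T x ih =>
    rw [← List.append_assoc, ffState_concat, ffState_concat,
      ih fun b hb y hy => h b hb y (List.mem_append_left _ hy),
      ffUpdate_append _ fun b hb => h b hb x (by simp)]

theorem ffState_of_fitsInBin {k : ℕ} {G : List ℝ} (hne : G ≠ []) (hG : FitsInBin k G)
    (hnonneg : ∀ x ∈ G, 0 ≤ x) : ffState k G = [load G] := by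
  induction G using List.reverseRecOn with
  | nil => exact absurd rfl hne
  | append_singleton G x ih =>
    obtain ⟨hlength, hsum⟩ := hG
    simp only [List.length_append, List.length_singleton] at hlength
    simp only [List.sum_append, List.sum_singleton] at hsum
    rw [ffState_concat]
    obtain rfl | hG := eq_or_ne G []
    · simp [ffState, ffUpdate, load]
    · have hx : 0 ≤ x := hnonneg x (by simp)
      rw [ih hG ⟨by omega, by linarith⟩ fun y hy => hnonneg y (List.mem_append_left _ hy),
        ffUpdate, if_pos ⟨hlength, hsum⟩]
      simp [load]

/-- A bin with content `G` accepts no item of `G'`. -/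
def Blocks (k : ℕ) (G G' : List ℝ) : Prop := ∀ x ∈ G', ¬ Accepts k (load G) x

theorem ffState_flatten {k : ℕ} {Gs : List (List ℝ)} (hne : ∀ G ∈ Gs, G ≠ [])
    (hfits : ∀ G ∈ Gs, FitsInBin k G) (hnonneg : ∀ G ∈ Gs, ∀ x ∈ G, 0 ≤ x)
    (hblocks : Gs.Pairwise (Blocks k)) : ffState k Gs.flatten = Gs.map load := by
  induction Gs with
  | nil => rfl
  | cons G Gs ih =>
    rw [List.forall_mem_cons] at hne hfits hnonneg
    rw [List.pairwise_cons] at hblocks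
    have hG : ffState k G = [load G] := ffState_of_fitsInBin hne.1 hfits.1 hnonneg.1
    have hG_blocks : ∀ b ∈ ffState k G, ∀ x ∈ Gs.flatten, ¬ Accepts k b x := by
      intro b hb x hx
      obtain ⟨G', hG', hx⟩ := List.mem_flatten.mp hx
      rw [hG, List.mem_singleton] at hb
      exact hb ▸ hblocks.1 G' hG' x hx
    rw [List.flatten_cons, ffState_append hG_blocks, hG, ih hne.2 hfits.2 hnonneg.2 hblocks.2,
      List.map_cons, List.singleton_append]

/-! ### The item sizes -/

/-- The deviation from `1/4` of the items near `1/4` in the `j`-th triple that First Fit packs. -/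
def offset (j : ℕ) : ℝ := (1 / 3) ^ j / 100

/-- A unit of size that is negligible against every `offset j` with `j ≤ M`. -/
def grain (M : ℕ) : ℝ := offset M / 9

/-- The size of the tiny items, `k` of which have total size `grain M`. -/
def tiny (k M : ℕ) : ℝ := grain M / k

theorem offset_pos (j : ℕ) : 0 < offset j := by unfold offset; positivity

theorem offset_eq_three_mul_succ (j : ℕ) : offset j = 3 * offset (j + 1) := by
  unfold offset; ring

theorem offset_antitone : Antitone offset :=
  antitone_nat_of_succ_le fun j => by linarith [offset_eq_three_mul_succ j, offset_pos (j + 1)]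

theorem offset_le (j : ℕ) : offset j ≤ 1 / 100 := by
  simpa [offset] using offset_antitone (Nat.zero_le j)

theorem grain_pos (M : ℕ) : 0 < grain M := div_pos (offset_pos M) (by norm_num)

theorem nine_mul_grain_le {j M : ℕ} (h : j ≤ M) : 9 * grain M ≤ offset j := by
  unfold grain; linarith [offset_antitone h]

theorem grain_le (M : ℕ) : grain M ≤ 1 / 900 := by
  unfold grain; linarith [offset_le M]

theorem tiny_pos {k : ℕ} (hk : 1 ≤ k) (M : ℕ) : 0 < tiny k M :=
  div_pos (grain_pos M) (by exact_mod_cast hk)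

theorem mul_tiny_le {k c : ℕ} (hc : c ≤ k) (M : ℕ) : c * tiny k M ≤ grain M := by
  rw [tiny, mul_div_left_comm]
  exact mul_le_of_le_one_right (grain_pos M).le
    (div_le_one_of_le₀ (by exact_mod_cast hc) k.cast_nonneg)

/-! ### The First Fit bins -/

/-- A First Fit bin full of tiny items. -/
def tinyBin (k M : ℕ) : List ℝ := List.replicate k (tiny k M)

/-- The `j`-th First Fit bin with three items near `1/4`. The deviations of its first two items
have different indices, so they do not cancel and its size exceeds `3/4`. -/
def tripleBin (M j : ℕ) : List ℝ :=
  [1 / 4 + offset j - 2 * grain M, 1 / 4 - offset (j + 1), 1 / 4 - 4 * grain M]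

/-- A First Fit bin with an item below `1/2` and an item above `1/4`. -/
def pairBin (M : ℕ) : List ℝ := [1 / 2 - 2 * grain M, 1 / 4 + 2 * grain M]

/-- A First Fit bin with a single item, which is larger than `1/2`. -/
def bigBin (M : ℕ) : List ℝ := [1 / 2 + grain M]

/-- The contents of the First Fit bins in order of opening; the input is their concatenation. -/
def ffBins (k m : ℕ) : List (List ℝ) :=
  List.replicate (m * (3 * k - 8)) (tinyBin k (k * m)) ++
    ((List.range (k * m)).map (tripleBin (k * m)) ++
      (List.replicate (k * m) (pairBin (k * m)) ++ List.replicate (3 * (k * m)) (bigBin (k * m))))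

theorem forall_mem_ffBins {k m : ℕ} {p : List ℝ → Prop} (htiny : p (tinyBin k (k * m)))
    (htriple : ∀ j < k * m, p (tripleBin (k * m) j)) (hpair : p (pairBin (k * m)))
    (hbig : p (bigBin (k * m))) : ∀ G ∈ ffBins k m, p G := by
  intro G hG
  simp only [ffBins, List.mem_append, List.mem_replicate, List.mem_map, List.mem_range] at hG
  rcases hG with ⟨-, rfl⟩ | ⟨j, hj, rfl⟩ | ⟨-, rfl⟩ | ⟨-, rfl⟩
  exacts [htiny, htriple j hj, hpair, hbig]

theorem sum_tripleBin (M j : ℕ) :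
    (tripleBin M j).sum = 3 / 4 + 2 * offset (j + 1) - 6 * grain M := by
  simp only [tripleBin, List.sum_cons, List.sum_nil]
  linarith [offset_eq_three_mul_succ j]

theorem sum_pairBin (M : ℕ) : (pairBin M).sum = 3 / 4 := by
  simp only [pairBin, List.sum_cons, List.sum_nil]; ring

theorem ne_nil_of_mem_ffBins {k : ℕ} (hk : 1 ≤ k) (m : ℕ) : ∀ G ∈ ffBins k m, G ≠ [] :=
  forall_mem_ffBins (by simpa [tinyBin] using Nat.one_le_iff_ne_zero.mp hk)
    (by simp [tripleBin]) (by simp [pairBin]) (by simp [bigBin])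

theorem fitsInBin_of_mem_ffBins {k : ℕ} (hk : 3 ≤ k) (m : ℕ) :
    ∀ G ∈ ffBins k m, FitsInBin k G := by
  have hgrain := grain_le (k * m)
  refine forall_mem_ffBins ⟨by simp [tinyBin], ?_⟩ (fun j _ => ⟨hk, ?_⟩)
    ⟨Nat.le_of_succ_le hk, ?_⟩ ⟨Nat.one_le_of_lt hk, ?_⟩
  · rw [tinyBin, List.sum_replicate, nsmul_eq_mul]
    linarith [mul_tiny_le le_rfl (k := k) (k * m)]
  · linarith [sum_tripleBin (k * m) j, offset_le (j + 1), grain_pos (k * m)]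
  · linarith [sum_pairBin (k * m)]
  · rw [bigBin, List.sum_singleton]; linarith

theorem pos_of_mem_ffBins {k : ℕ} (hk : 1 ≤ k) (m : ℕ) : ∀ G ∈ ffBins k m, ∀ x ∈ G, 0 < x := by
  have hpos := grain_pos (k * m)
  have hgrain := grain_le (k * m)
  refine forall_mem_ffBins ?_ (fun j _ => ?_) ?_ ?_
  · exact fun x hx => List.eq_of_mem_replicate hx ▸ tiny_pos hk _
  · have := offset_pos j
    have := offset_le (j + 1)
    simp only [tripleBin, List.forall_mem_cons, List.not_mem_nil, false_imp_iff, implies_true]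
    refine ⟨?_, ?_, ?_, trivial⟩ <;> linarith
  · simp only [pairBin, List.forall_mem_cons, List.not_mem_nil, false_imp_iff, implies_true]
    refine ⟨?_, ?_, trivial⟩ <;> linarith
  · simp only [bigBin, List.forall_mem_singleton]
    linarith

theorem length_ffBins {k : ℕ} (hk : 3 ≤ k) (m : ℕ) :
    (ffBins k m).length = 8 * m * (k - 1) := by
  obtain ⟨c, rfl⟩ := Nat.exists_eq_add_of_le' hk
  simp only [ffBins, List.length_append, List.length_replicate, List.length_map, List.length_range,
    show 3 * (c + 3) - 8 = 3 * c + 1 by omega, show c + 3 - 1 = c + 2 by omega]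
  ring

theorem tinyBin_blocks (k M : ℕ) (G : List ℝ) : Blocks k (tinyBin k M) G :=
  fun _ _ haccepts => haccepts.1.ne (List.length_replicate ..)

theorem blocks_of_one_lt_sum_add {k : ℕ} {G G' : List ℝ} (h : ∀ x ∈ G', 1 < G.sum + x) :
    Blocks k G G' :=
  fun x hx haccepts => (h x hx).not_ge haccepts.2

theorem tripleBin_blocks_tripleBin (k : ℕ) {M i j : ℕ} (hij : i < j) (hj : j < M) :
    Blocks k (tripleBin M i) (tripleBin M j) := by
  refine blocks_of_one_lt_sum_add ?_
  have hpos := grain_pos M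
  have hgrain_i : 9 * grain M ≤ offset (i + 1) := nine_mul_grain_le (hij.trans hj)
  have hgrain_j : 9 * grain M ≤ offset j := nine_mul_grain_le hj.le
  have hoffset : 3 * offset (j + 1) ≤ offset (i + 1) :=
    offset_eq_three_mul_succ j ▸ offset_antitone hij
  rw [sum_tripleBin]
  simp only [tripleBin, List.forall_mem_cons, List.not_mem_nil, false_imp_iff, implies_true]
  refine ⟨?_, ?_, ?_, trivial⟩ <;> linarith

theorem tripleBin_blocks_of_quarter_le (k : ℕ) {M j : ℕ} (hj : j < M) {G : List ℝ}
    (hG : ∀ x ∈ G, 1 / 4 ≤ x) : Blocks k (tripleBin M j) G :=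
  blocks_of_one_lt_sum_add fun x hx => by
    linarith [sum_tripleBin M j, nine_mul_grain_le hj, grain_pos M, hG x hx]

theorem pairBin_blocks_of_quarter_lt (k M : ℕ) {G : List ℝ} (hG : ∀ x ∈ G, 1 / 4 < x) :
    Blocks k (pairBin M) G :=
  blocks_of_one_lt_sum_add fun x hx => by linarith [sum_pairBin M, hG x hx]

theorem bigBin_blocks_bigBin (k M : ℕ) : Blocks k (bigBin M) (bigBin M) :=
  blocks_of_one_lt_sum_add fun x hx => by
    rw [bigBin, List.mem_singleton] at hx
    rw [bigBin, List.sum_singleton]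
    linarith [grain_pos M]

theorem quarter_lt_of_mem_pairBin {M : ℕ} : ∀ x ∈ pairBin M, 1 / 4 < x := by
  simp only [pairBin, List.forall_mem_cons, List.not_mem_nil, false_imp_iff, implies_true]
  refine ⟨?_, ?_, trivial⟩ <;> linarith [grain_pos M, grain_le M]

theorem quarter_lt_of_mem_bigBin {M : ℕ} : ∀ x ∈ bigBin M, 1 / 4 < x := by
  simp only [bigBin, List.forall_mem_singleton]
  linarith [grain_pos M]

theorem pairwise_blocks_ffBins (k m : ℕ) : (ffBins k m).Pairwise (Blocks k) := by
  simp only [ffBins, List.pairwise_append, List.pairwise_replicate, List.pairwise_map,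
    List.mem_append, List.mem_replicate, List.mem_map, List.mem_range]
  refine ⟨.inr (tinyBin_blocks k _ _), ⟨?_, ⟨.inr ?_, .inr (bigBin_blocks_bigBin k _), ?_⟩, ?_⟩, ?_⟩
  · exact List.pairwise_lt_range.imp_of_mem fun _ hj hij =>
      tripleBin_blocks_tripleBin k hij (List.mem_range.mp hj)
  · exact pairBin_blocks_of_quarter_lt k _ quarter_lt_of_mem_pairBin
  · rintro _ ⟨-, rfl⟩ _ ⟨-, rfl⟩
    exact pairBin_blocks_of_quarter_lt k _ quarter_lt_of_mem_bigBin
  · rintro _ ⟨j, hj, rfl⟩ _ (⟨-, rfl⟩ | ⟨-, rfl⟩)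
    · exact tripleBin_blocks_of_quarter_le k hj fun x hx => (quarter_lt_of_mem_pairBin x hx).le
    · exact tripleBin_blocks_of_quarter_le k hj fun x hx => (quarter_lt_of_mem_bigBin x hx).le
  · rintro _ ⟨-, rfl⟩ _ -
    exact tinyBin_blocks k _ _

theorem FF_flatten_ffBins {k : ℕ} (hk : 3 ≤ k) (m : ℕ) :
    FF k (ffBins k m).flatten = 8 * m * (k - 1) := by
  have hk' : 1 ≤ k := by omega
  rw [FF, ffState_flatten (ne_nil_of_mem_ffBins hk' m) (fitsInBin_of_mem_ffBins hk m)
    (fun G hG x hx => (pos_of_mem_ffBins hk' m G hG x hx).le) (pairwise_blocks_ffBins k m),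
    List.length_map, length_ffBins hk]

theorem validInput_flatten_ffBins {k : ℕ} (hk : 3 ≤ k) (m : ℕ) :
    ValidInput (ffBins k m).flatten := by
  intro x hx
  obtain ⟨G, hG, hx⟩ := List.mem_flatten.mp hx
  have hpos := pos_of_mem_ffBins (by omega) m G hG
  exact ⟨hpos x hx, (List.single_le_sum (fun y hy => (hpos y hy).le) x hx).trans
    (fitsInBin_of_mem_ffBins hk m G hG).sum_le⟩

/-! ### The optimal bins -/

/-- The item just below `1/4` that the triple preceding the `j`-th one leaves to the `j`-th
optimal bin; there is none for `j = 0`. -/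
def leftover : ℕ → List ℝ
  | 0 => []
  | j + 1 => [1 / 4 - offset (j + 1)]

/-- The `j`-th optimal bin that contains the first item of a triple. -/
def chainBin (k M j : ℕ) : List ℝ :=
  leftover j ++ [1 / 4 + offset j - 2 * grain M, 1 / 2 + grain M] ++
    List.replicate (k - 3) (tiny k M)

/-- An optimal bin that contains the last item of a triple. -/
def quartersBin (k M : ℕ) : List ℝ :=
  [1 / 4 - 4 * grain M, 1 / 4 + 2 * grain M, 1 / 2 + grain M] ++
    List.replicate (k - 3) (tiny k M)

/-- An optimal bin with two items near `1/2`. -/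
def halvesBin (k M : ℕ) : List ℝ :=
  [1 / 2 - 2 * grain M, 1 / 2 + grain M] ++ List.replicate (k - 2) (tiny k M)

/-- The bins of a packing of the items of `ffBins k m` that is optimal up to one bin. -/
def optBins (k m : ℕ) : List (List ℝ) :=
  (List.range (k * m)).map (chainBin k (k * m)) ++ [leftover (k * m)] ++
    List.replicate (k * m) (quartersBin k (k * m)) ++
    List.replicate (k * m) (halvesBin k (k * m))

theorem length_leftover_le (j : ℕ) : (leftover j).length ≤ 1 := by
  cases j <;> simp [leftover]

theorem sum_leftover_le (j : ℕ) : (leftover j).sum ≤ 1 / 4 - offset j := by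
  cases j with
  | zero => rw [leftover, List.sum_nil]; linarith [offset_le 0]
  | succ j => rw [leftover, List.sum_singleton]

theorem fitsInBin_append_replicate_tiny {k n M : ℕ} {G : List ℝ} (hlength : G.length + n ≤ k)
    (hsum : G.sum + grain M ≤ 1) : FitsInBin k (G ++ List.replicate n (tiny k M)) where
  length_le := by rwa [List.length_append, List.length_replicate]
  sum_le := by
    rw [List.sum_append, List.sum_replicate, nsmul_eq_mul]
    linarith [mul_tiny_le ((Nat.le_add_left n _).trans hlength) M]

theorem fitsInBin_leftover {k : ℕ} (hk : 1 ≤ k) (j : ℕ) : FitsInBin k (leftover j) :=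
  ⟨(length_leftover_le j).trans hk, by linarith [sum_leftover_le j, offset_pos j]⟩

theorem fitsInBin_chainBin {k : ℕ} (hk : 3 ≤ k) (M j : ℕ) : FitsInBin k (chainBin k M j) := by
  refine fitsInBin_append_replicate_tiny ?_ ?_
  · simp only [List.length_append, List.length_cons, List.length_nil]
    have := length_leftover_le j
    omega
  · simp only [List.sum_append, List.sum_cons, List.sum_nil]
    linarith [sum_leftover_le j]

theorem fitsInBin_quartersBin {k : ℕ} (hk : 3 ≤ k) (M : ℕ) : FitsInBin k (quartersBin k M) := by
  refine fitsInBin_append_replicate_tiny (Nat.add_sub_cancel' hk).le ?_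
  simp only [List.sum_cons, List.sum_nil]
  linarith [grain_pos M]

theorem fitsInBin_halvesBin {k : ℕ} (hk : 2 ≤ k) (M : ℕ) : FitsInBin k (halvesBin k M) := by
  refine fitsInBin_append_replicate_tiny (Nat.add_sub_cancel' hk).le ?_
  simp only [List.sum_cons, List.sum_nil]
  linarith

theorem fitsInBin_of_mem_optBins {k : ℕ} (hk : 3 ≤ k) (m : ℕ) :
    ∀ B ∈ optBins k m, FitsInBin k B := by
  intro B hB
  simp only [optBins, List.mem_append, List.mem_map, List.mem_singleton, List.mem_replicate] at hB
  rcases hB with ((⟨j, -, rfl⟩ | rfl) | ⟨-, rfl⟩) | ⟨-, rfl⟩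
  exacts [fitsInBin_chainBin hk _ j, fitsInBin_leftover (by omega) _, fitsInBin_quartersBin hk _,
    fitsInBin_halvesBin (by omega) _]

theorem length_optBins (k m : ℕ) : (optBins k m).length = 3 * (k * m) + 1 := by
  simp only [optBins, List.length_append, List.length_map, List.length_range,
    List.length_singleton, List.length_replicate]
  ring

/-- The multiset of items of the input, listed by size; both packings are compared with it. -/
def items (k m : ℕ) : Multiset ℝ :=
  (m * (3 * k - 8) * k) • {tiny k (k * m)} +
    ∑ j ∈ Finset.range (k * m), {1 / 4 + offset j - 2 * grain (k * m)} +
    ∑ j ∈ Finset.range (k * m), {1 / 4 - offset (j + 1)} +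
    (k * m) • ({1 / 4 - 4 * grain (k * m)} + {1 / 4 + 2 * grain (k * m)} +
      {1 / 2 - 2 * grain (k * m)}) +
    (3 * (k * m)) • {1 / 2 + grain (k * m)}

theorem sum_map_range_eq_sum {M : Type*} [AddCommMonoid M] (n : ℕ) (f : ℕ → M) :
    ((List.range n).map f).sum = ∑ j ∈ Finset.range n, f j :=
  rfl

theorem coe_flatten_ffBins (k m : ℕ) : ((ffBins k m).flatten : Multiset ℝ) = items k m := by
  rw [coe_flatten_eq_sum]
  simp only [ffBins, tinyBin, tripleBin, pairBin, bigBin, items, Function.comp_def,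
    List.map_append, List.map_replicate, List.map_map, List.sum_append, List.sum_replicate,
    sum_map_range_eq_sum, ← Multiset.cons_coe, ← Multiset.singleton_add, Multiset.coe_nil, add_zero,
    Multiset.coe_replicate, ← Multiset.nsmul_singleton, Finset.sum_add_distrib, Finset.sum_const,
    Finset.card_range]
  module

theorem sum_leftover (M : ℕ) :
    ∑ j ∈ Finset.range M, (leftover j : Multiset ℝ) + leftover M =
      ∑ j ∈ Finset.range M, {1 / 4 - offset (j + 1)} := by
  rw [← Finset.sum_range_succ (fun j => (leftover j : Multiset ℝ)), Finset.sum_range_succ']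
  simp only [leftover, Multiset.coe_singleton, Multiset.coe_nil, add_zero]

theorem coe_flatten_optBins {k : ℕ} (hk : 3 ≤ k) (m : ℕ) :
    ((optBins k m).flatten : Multiset ℝ) = items k m := by
  obtain ⟨c, rfl⟩ := Nat.exists_eq_add_of_le' hk
  rw [coe_flatten_eq_sum, items, ← sum_leftover]
  simp only [optBins, chainBin, quartersBin, halvesBin, Function.comp_def, List.map_append,
    List.map_replicate, List.map_map, List.map_cons, List.map_nil, List.sum_singleton,
    List.sum_append, List.sum_replicate, sum_map_range_eq_sum, ← Multiset.coe_add,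
    ← Multiset.cons_coe, ← Multiset.singleton_add, Multiset.coe_nil, add_zero,
    Multiset.coe_replicate, ← Multiset.nsmul_singleton, Finset.sum_add_distrib, Finset.sum_const,
    Finset.card_range, show 3 * (c + 3) - 8 = 3 * c + 1 by omega, show c + 3 - 3 = c by omega,
    show c + 3 - 2 = c + 1 by omega]
  module

theorem flatten_ffBins_perm_flatten_optBins {k : ℕ} (hk : 3 ≤ k) (m : ℕ) :
    (ffBins k m).flatten.Perm (optBins k m).flatten :=
  Multiset.coe_eq_coe.mp ((coe_flatten_ffBins k m).trans (coe_flatten_optBins hk m).symm)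

/-! ### The competitive ratio -/

theorem OPT_flatten_ffBins_le {k : ℕ} (hk : 3 ≤ k) (m : ℕ) :
    OPT k (ffBins k m).flatten ≤ 3 * (k * m) + 1 :=
  length_optBins k m ▸
    OPT_le_length (flatten_ffBins_perm_flatten_optBins hk m) (fitsInBin_of_mem_optBins hk m)

theorem mul_le_length_flatten_ffBins (k m : ℕ) : k * m ≤ (ffBins k m).flatten.length := by
  simp only [ffBins, bigBin, List.flatten_append, List.length_append, List.length_flatten,
    List.map_replicate, List.sum_replicate, List.length_singleton, smul_eq_mul]
  omega

theorem le_OPT_flatten_ffBins {k : ℕ} (hk : 3 ≤ k) (m : ℕ) : m ≤ OPT k (ffBins k m).flatten := by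
  have hlength : (ffBins k m).flatten.length ≤ k * OPT k (ffBins k m).flatten :=
    length_le_mul_OPT (by omega) fun x hx => (validInput_flatten_ffBins hk m x hx).2
  exact Nat.le_of_mul_le_mul_left ((mul_le_length_flatten_ffBins k m).trans hlength) (by omega)

theorem ratio_mul_OPT_sub_one_le_FF {k : ℕ} (hk : 3 ≤ k) (m : ℕ) :
    8 * ((k : ℝ) - 1) / (3 * k) * (OPT k (ffBins k m).flatten - 1) ≤
      FF k (ffBins k m).flatten := by
  have hk' : (3 : ℝ) ≤ k := by exact_mod_cast hk
  have hOPT : (OPT k (ffBins k m).flatten : ℝ) ≤ 3 * (k * m) + 1 := by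
    exact_mod_cast OPT_flatten_ffBins_le hk m
  calc 8 * ((k : ℝ) - 1) / (3 * k) * (OPT k (ffBins k m).flatten - 1)
      ≤ 8 * ((k : ℝ) - 1) / (3 * k) * (3 * (k * m)) := by
        gcongr
        · exact div_nonneg (by linarith) (by linarith)
        · linarith
    _ = 8 * m * (k - 1) := by field_simp
    _ = FF k (ffBins k m).flatten := by
        rw [FF_flatten_ffBins hk]
        push_cast [Nat.cast_sub (show 1 ≤ k by omega)]
        ring

theorem ff_lb_mid_k_general (k : ℕ) (hk : 3 ≤ k) (ε : ℝ) (hε : 0 < ε) (N : ℕ) :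
    ∃ L : List ℝ, ValidInput L ∧ N ≤ OPT k L ∧
      (8 * ((k : ℝ) - 1) / (3 * k) - ε) * (OPT k L : ℝ) ≤ (FF k L : ℝ) := by
  set ratio := 8 * ((k : ℝ) - 1) / (3 * k)
  obtain ⟨R, hR⟩ := exists_nat_ge (ratio / ε)
  set L := (ffBins k (max N R)).flatten
  have hOPT : max N R ≤ OPT k L := le_OPT_flatten_ffBins hk _
  refine ⟨L, validInput_flatten_ffBins hk _, (le_max_left N R).trans hOPT, ?_⟩
  have hratio_le : ratio ≤ ε * OPT k L :=
    (div_le_iff₀' hε).mp (hR.trans (by exact_mod_cast (le_max_right N R).trans hOPT))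
  calc (ratio - ε) * OPT k L ≤ ratio * (OPT k L - 1) := by linarith
    _ ≤ FF k L := ratio_mul_OPT_sub_one_le_FF hk _

/-- For 5 ≤ k ≤ 10, every ε > 0 and every N there is an input `L` with
OPT(L) ≥ N and FF(L) ≥ (8(k−1)/(3k) − ε)·OPT(L): the asymptotic competitive ratio
of First Fit for 5 ≤ k ≤ 10 is at least 8(k−1)/(3k). -/
theorem ff_lb_mid_k (k : ℕ) (hk1 : 5 ≤ k) (hk2 : k ≤ 10) (ε : ℝ) (hε : 0 < ε)
    (N : ℕ) :
    ∃ L : List ℝ, ValidInput L ∧ N ≤ OPT k L ∧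
      (8 * ((k : ℝ) - 1) / (3 * k) - ε) * (OPT k L : ℝ) ≤ (FF k L : ℝ) := by
  exact ff_lb_mid_k_general k (by omega) ε hε N
end
end
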